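/- arXiv:2211.15032 — 2 statements merged into one kernel-verified Lean document; each statement's English description precedes it below -/
import Mathlib

section
/- Let Sp(2n, ℂ) act diagonally on the direct sum of N copies of its standard representation ℂ^{2n}. Then the algebra of polynomial invariants Sym((ℂ^{2n})^{⊕N})^{Sp(2n)} is generated by the quadratic invariants ω(v_i, v_j) given by the symplectic form paired between the i-th and j-th copies (first fundamental theorem of invariant theory for Sp(2n)). -/
open MvPolynomial

/-- The quadratic invariant `q_{ij}` given by pairing the `i`-th and `j`-th copies of the
standard representation `ℂ^{2n}` with the standard symplectic form `ω(x, y) = x ⬝ J y`. -/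
noncomputable def sympPairPoly (n N : ℕ) (i j : Fin N) :
    MvPolynomial (Fin N × (Fin n ⊕ Fin n)) ℂ :=
  ∑ a : Fin n ⊕ Fin n, ∑ b : Fin n ⊕ Fin n,
    C (Matrix.J (Fin n) ℂ a b) * X (i, a) * X (j, b)

/-- A polynomial `P` on `N` copies of `ℂ^{2n}` is `Sp(2n, ℂ)`-invariant if its values are
unchanged when every copy is acted on by a symplectic matrix. -/
def IsSpInvariant (n N : ℕ) (P : MvPolynomial (Fin N × (Fin n ⊕ Fin n)) ℂ) : Prop :=
  ∀ S ∈ Matrix.symplecticGroup (Fin n) ℂ, ∀ v : Fin N → (Fin n ⊕ Fin n) → ℂ,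
    eval (fun p : Fin N × (Fin n ⊕ Fin n) => S.mulVec (v p.1) p.2) P
      = eval (fun p : Fin N × (Fin n ⊕ Fin n) => v p.1 p.2) P

namespace SpFFT

/-! ### The Fischer pairing -/

section Fischer
set_option linter.unusedSectionVars false
variable {σ τ : Type} [Fintype σ] [Fintype τ]

/-- The weight `m!` of a multi-index. -/
noncomputable def wt (m : σ →₀ ℕ) : ℂ := ∏ i, ((m i).factorial : ℂ)

/-- The bilinear Fischer pairing on polynomials. -/
noncomputable def fischer : MvPolynomial σ ℂ →ₗ[ℂ] MvPolynomial σ ℂ →ₗ[ℂ] ℂ :=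
  (basisMonomials σ ℂ).constr ℂ (fun m => wt m • lcoeff ℂ m)

lemma fischer_monomial (m : σ →₀ ℕ) (c : ℂ) (g : MvPolynomial σ ℂ) :
    fischer (monomial m c) g = c * (wt m * coeff m g) := by
  have h : monomial m c = c • (basisMonomials σ ℂ) m := by
    simp [smul_monomial]
  rw [h, map_smul, fischer, Module.Basis.constr_basis]
  simp [lcoeff]

lemma fischer_eq_sum (f g : MvPolynomial σ ℂ) :
    fischer f g = ∑ m ∈ f.support, coeff m f * (wt m * coeff m g) := by
  conv_lhs => rw [f.as_sum]
  rw [map_sum, LinearMap.sum_apply]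
  simp only [fischer_monomial]

lemma wt_add_single (m : σ →₀ ℕ) (i : σ) :
    wt (m + Finsupp.single i 1) = wt m * (m i + 1) := by
  classical
  unfold wt
  rw [← Finset.mul_prod_erase Finset.univ _ (Finset.mem_univ i),
    ← Finset.mul_prod_erase Finset.univ (fun j => ((m j).factorial : ℂ)) (Finset.mem_univ i)]
  have : ∏ x ∈ Finset.univ.erase i, (((m + Finsupp.single i 1 : σ →₀ ℕ) x).factorial : ℂ)
      = ∏ x ∈ Finset.univ.erase i, ((m x).factorial : ℂ) := by
    refine Finset.prod_congr rfl fun x hx => ?_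
    have hx' : i ≠ x := fun h => by simp [h] at hx
    simp [hx']
  rw [this]
  simp [Nat.factorial_succ]
  ring

lemma fischer_mul_X (f g : MvPolynomial σ ℂ) (i : σ) :
    fischer (f * X i) g = fischer f (pderiv i g) := by
  induction f using MvPolynomial.induction_on' with
  | add p q hp hq => simp only [add_mul, map_add, LinearMap.add_apply, hp, hq]
  | monomial m c =>
    rw [X, monomial_mul, fischer_monomial, fischer_monomial, coeff_pderiv, wt_add_single]
    ring

/-- Linear substitution. -/
noncomputable def lsub (A : σ → τ → ℂ) : MvPolynomial σ ℂ →ₐ[ℂ] MvPolynomial τ ℂ :=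
  aeval (fun i => ∑ j, C (A i j) * X j)

lemma lsub_X (A : σ → τ → ℂ) (i : σ) : lsub A (X i) = ∑ j, C (A i j) * X j := by
  simp [lsub]

lemma eval_lsub (A : σ → τ → ℂ) (f : MvPolynomial σ ℂ) (x : τ → ℂ) :
    eval x (lsub A f) = eval (fun i => ∑ j, A i j * x j) f := by
  induction f using MvPolynomial.induction_on with
  | C a => simp [lsub]
  | add p q hp hq => simp [hp, hq]
  | mul_X p i hp => simp [hp, lsub_X]

lemma coeff_zero_eq_eval (f : MvPolynomial σ ℂ) : coeff 0 f = eval (fun _ => 0) f := by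
  rw [show (fun _ => (0:ℂ)) = (0 : σ → ℂ) from rfl, eval_zero]
  exact (congrFun constantCoeff_eq f).symm

lemma pderiv_lsub (A : σ → τ → ℂ) (g : MvPolynomial σ ℂ) (j : τ) :
    pderiv j (lsub A g) = ∑ i, C (A i j) * lsub A (pderiv i g) := by
  classical
  induction g using MvPolynomial.induction_on with
  | C a => simp [lsub]
  | add p q hp hq => simp [hp, hq, mul_add, Finset.sum_add_distrib]
  | mul_X p k hp =>
    have h1 : pderiv j (lsub A (X k)) = C (A k j) := by
      rw [lsub_X, map_sum]
      simp [pderiv_X, Pi.single_apply]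
    rw [map_mul, pderiv_mul, hp, h1]
    simp only [pderiv_mul, map_add, map_mul, mul_add, Finset.sum_add_distrib, pderiv_X]
    congr 1
    · rw [Finset.sum_mul]
      exact Finset.sum_congr rfl fun _ _ => by ring
    · rw [Finset.sum_eq_single k]
      · simp; ring
      · intro b _ hb
        simp [hb.symm]
      · simp

lemma fischer_lsub (A : σ → τ → ℂ) (f : MvPolynomial σ ℂ) (g : MvPolynomial τ ℂ) :
    fischer (lsub A f) g = fischer f (lsub (fun j i => A i j) g) := by
  induction f using MvPolynomial.induction_on generalizing g with
  | C a =>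
    have h : lsub A (C a) = monomial 0 a := by simp [lsub]
    rw [h, C_apply, fischer_monomial, fischer_monomial, coeff_zero_eq_eval, coeff_zero_eq_eval,
      eval_lsub]
    simp [wt]
  | add p q hp hq => simp only [map_add, LinearMap.add_apply, hp, hq]
  | mul_X p i hp =>
    rw [map_mul, lsub_X, fischer_mul_X, pderiv_lsub, Finset.mul_sum, map_sum, map_sum,
      LinearMap.sum_apply]
    refine Finset.sum_congr rfl fun j _ => ?_
    rw [show lsub A p * (C (A i j) * X j) = A i j • (lsub A p * X j) by
      rw [smul_eq_C_mul]; ring, map_smul, LinearMap.smul_apply, fischer_mul_X, hp,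
      ← smul_eq_C_mul, map_smul]

/-- Complex conjugation of coefficients. -/
noncomputable def conjP : MvPolynomial σ ℂ →+* MvPolynomial σ ℂ := map (starRingEnd ℂ)

lemma fischer_conj_eq_zero (f : MvPolynomial σ ℂ) (h : fischer f (conjP f) = 0) : f = 0 := by
  rw [fischer_eq_sum] at h
  have h2 : ∀ m, coeff m f * (wt m * coeff m (conjP f)) =
      (((∏ i, ((m i).factorial : ℝ)) * Complex.normSq (coeff m f) : ℝ) : ℂ) := by
    intro m
    rw [conjP, coeff_map, Complex.ofReal_mul, ← Complex.mul_conj, wt]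
    push_cast
    ring
  simp only [h2] at h
  rw [← Complex.ofReal_sum, Complex.ofReal_eq_zero, Finset.sum_eq_zero_iff_of_nonneg] at h
  · ext m
    by_cases hm : m ∈ f.support
    · have h3 := h m hm
      have h4 : (∏ i, ((m i).factorial : ℝ)) ≠ 0 :=
        Finset.prod_ne_zero_iff.2 fun i _ => by positivity
      simpa [h4] using h3
    · simpa using hm
  · intro m _
    exact mul_nonneg (Finset.prod_nonneg fun i _ => by positivity) (Complex.normSq_nonneg _)

lemma totalDegree_lsub (A : σ → τ → ℂ) (f : MvPolynomial σ ℂ) :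
    (lsub A f).totalDegree ≤ f.totalDegree := by
  rw [lsub, aeval_def, eval₂_eq']
  refine totalDegree_finsetSum_le fun d hd => ?_
  refine (totalDegree_mul _ _).trans ?_
  rw [algebraMap_eq, totalDegree_C, zero_add]
  refine (totalDegree_finsetProd _ _).trans ?_
  have h1 : ∀ i, ((∑ j, C (A i j) * X j : MvPolynomial τ ℂ) ^ d i).totalDegree ≤ d i := by
    intro i
    refine (totalDegree_pow _ _).trans ?_
    have : (∑ j, C (A i j) * X j : MvPolynomial τ ℂ).totalDegree ≤ 1 := by
      refine totalDegree_finsetSum_le fun j _ => ?_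
      refine (totalDegree_mul _ _).trans ?_
      simp
    calc _ ≤ d i * 1 := Nat.mul_le_mul_left _ this
      _ = d i := mul_one _
  refine (Finset.sum_le_sum fun i _ => h1 i).trans ?_
  have := le_totalDegree hd
  rwa [Finsupp.sum_fintype _ _ (by simp)] at this

end Fischer

/-! ### Nullstellensatz descent -/

lemma descent {σ τ : Type} [Finite σ] [Finite τ]
    (φ : MvPolynomial σ ℂ →ₐ[ℂ] MvPolynomial τ ℂ)
    (hφ : ∀ y : σ → ℂ, ∃ x : τ → ℂ, ∀ f, eval x (φ f) = eval y f)
    (P : MvPolynomial τ ℂ) (b : MvPolynomial σ ℂ) (hb : b ≠ 0) :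
    ∀ a, φ a = P * φ b → ∃ c, P = φ c := by
  have hinj : ∀ f, φ f = 0 → f = 0 := by
    intro f hf
    refine MvPolynomial.funext fun y => ?_
    obtain ⟨x, hx⟩ := hφ y
    rw [← hx, hf]; simp
  induction b using UniqueFactorizationMonoid.induction_on_prime with
  | h₁ => exact absurd rfl hb
  | h₂ u hu =>
    intro a ha
    obtain ⟨v, hv⟩ := hu.exists_right_inv
    refine ⟨a * v, ?_⟩
    rw [map_mul, ha, mul_assoc, ← map_mul, hv]; simp
  | h₃ b p hb0 hp ih =>
    intro a ha
    have hdvd : p ∣ a := by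
      have : (Ideal.span {p}).IsPrime := (Ideal.span_singleton_prime hp.ne_zero).2 hp
      rw [← Ideal.mem_span_singleton,
        ← IsPrime.vanishingIdeal_zeroLocus (K := ℂ) (Ideal.span {p}), mem_vanishingIdeal_iff]
      intro y hy
      have hpy : eval y p = 0 := by
        have := mem_zeroLocus_iff.1 hy p (Ideal.mem_span_singleton_self p)
        simpa [aeval_eq_eval] using this
      obtain ⟨x, hx⟩ := hφ y
      have h1 : eval y a = 0 := by
        rw [← hx, ha, map_mul, hx, map_mul, hpy]; simp
      simpa [aeval_eq_eval] using h1
    obtain ⟨a', rfl⟩ := hdvd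
    refine ih hb0 a' ?_
    have hp0 : φ p ≠ 0 := fun h => hp.ne_zero (hinj _ h)
    apply mul_left_cancel₀ hp0
    rw [← map_mul, ha, map_mul]; ring

/-! ### Darboux normal form -/

lemma darboux {K ι : Type} [Field K] [CharZero K] [DecidableEq ι] (n : ℕ) :
    ∀ (s : Finset ι) (A : ι → ι → K), s.card ≤ 2 * n → (∀ k l, A k l = - A l k) →
      (∀ k l, k ∉ s → A k l = 0) →
      ∃ p q : Fin n → ι → K, ∀ k l, A k l = ∑ a, (p a k * q a l - q a k * p a l) := by
  induction n with
  | zero =>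
    intro s A hs _ h0
    have : s = ∅ := by simpa using hs
    subst this
    exact ⟨fun _ _ => 0, fun _ _ => 0, fun k l => by simp [h0]⟩
  | succ n ih =>
    intro s A hs hA h0
    by_cases hz : ∀ i j, A i j = 0
    · exact ⟨fun _ _ => 0, fun _ _ => 0, fun k l => by simp [hz]⟩
    push Not at hz
    obtain ⟨i, j, hij⟩ := hz
    have hdiag : ∀ k, A k k = 0 := fun k => self_eq_neg.1 (hA k k)
    have hne : i ≠ j := by rintro rfl; exact hij (hdiag i)
    have hi : i ∈ s := by by_contra h; exact hij (h0 _ _ h)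
    have hj : j ∈ s := by
      by_contra h; apply hij; rw [hA, h0 _ _ h, neg_zero]
    obtain ⟨p, q, hpq⟩ := ih ((s.erase i).erase j)
      (fun k l => A k l + (A k i * A j l - A k j * A i l) / A i j)
      (by
        rw [Finset.card_erase_of_mem (Finset.mem_erase.2 ⟨hne.symm, hj⟩),
          Finset.card_erase_of_mem hi]; omega)
      (by
        intro k l
        rw [hA k l, hA k i, hA j l, hA k j, hA i l]; ring)
      (by
        intro k l hk
        by_cases h1 : k = i
        · subst h1; rw [hdiag]; field_simp; ring
        by_cases h2 : k = j
        · subst h2; rw [hdiag, hA k i]; field_simp; ring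
        have : k ∉ s := fun h => hk (by simp [h1, h2, h])
        simp [h0 _ _ this])
    refine ⟨Fin.cons (fun k => - A k j / A i j) p, Fin.cons (fun k => A k i) q, fun k l => ?_⟩
    rw [Fin.sum_univ_succ]
    simp only [Fin.cons_zero, Fin.cons_succ]
    rw [← hpq, hA l i, hA l j]
    field_simp
    ring

/-! ### Invariants on copies indexed by an arbitrary finite type -/

/-- The symplectic pairing polynomial, with copies indexed by any type. -/
noncomputable def qq (n : ℕ) {ι : Type} (i j : ι) : MvPolynomial (ι × (Fin n ⊕ Fin n)) ℂ :=
  ∑ a : Fin n ⊕ Fin n, ∑ b : Fin n ⊕ Fin n,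
    C (Matrix.J (Fin n) ℂ a b) * X (i, a) * X (j, b)

/-- Invariance, with copies indexed by any type. -/
def Inv (n : ℕ) {ι : Type} (P : MvPolynomial (ι × (Fin n ⊕ Fin n)) ℂ) : Prop :=
  ∀ S ∈ Matrix.symplecticGroup (Fin n) ℂ, ∀ v : ι → (Fin n ⊕ Fin n) → ℂ,
    eval (fun p : ι × (Fin n ⊕ Fin n) => S.mulVec (v p.1) p.2) P
      = eval (fun p : ι × (Fin n ⊕ Fin n) => v p.1 p.2) P

/-- The algebra generated by all pairings. -/
noncomputable def Adj (n : ℕ) (ι : Type) :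
    Subalgebra ℂ (MvPolynomial (ι × (Fin n ⊕ Fin n)) ℂ) :=
  Algebra.adjoin ℂ (Set.range fun p : ι × ι => qq n p.1 p.2)

lemma qq_mem (n : ℕ) {ι : Type} (i j : ι) : qq n i j ∈ Adj n ι :=
  Algebra.subset_adjoin ⟨(i, j), rfl⟩

lemma eval_qq (n : ℕ) {ι : Type} (i j : ι) (x : ι × (Fin n ⊕ Fin n) → ℂ) :
    eval x (qq n i j) = (Matrix.of (fun i a => x (i, a)) * Matrix.J (Fin n) ℂ *
      (Matrix.of (fun i a => x (i, a))).transpose) i j := by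
  simp only [qq, map_sum, map_mul, eval_C, eval_X, Matrix.mul_apply, Matrix.of_apply,
    Matrix.transpose_apply, Finset.sum_mul]
  rw [Finset.sum_comm]
  exact Finset.sum_congr rfl fun _ _ => Finset.sum_congr rfl fun _ _ => by ring

lemma mul_J_mul_transpose_skew {R ι : Type} [CommRing R] {n : ℕ}
    (M : Matrix ι (Fin n ⊕ Fin n) R) (i j : ι) :
    (M * Matrix.J (Fin n) R * M.transpose) i j
      = - (M * Matrix.J (Fin n) R * M.transpose) j i := by
  have : (M * Matrix.J (Fin n) R * M.transpose).transpose
      = - (M * Matrix.J (Fin n) R * M.transpose) := by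
    simp [Matrix.transpose_mul, Matrix.J_transpose, Matrix.mul_assoc]
  have h := congrFun (congrFun this j) i
  simpa using h

lemma darboux_matrix {K : Type} [Field K] [CharZero K] (n : ℕ)
    (A : Matrix (Fin n ⊕ Fin n) (Fin n ⊕ Fin n) K) (hA : ∀ k l, A k l = - A l k) :
    ∃ M : Matrix (Fin n ⊕ Fin n) (Fin n ⊕ Fin n) K,
      M * Matrix.J (Fin n) K * M.transpose = A := by
  obtain ⟨p, q, h⟩ := darboux n Finset.univ A (by simp; omega) hA (by simp)
  refine ⟨Matrix.of fun k => Sum.elim (fun a => q a k) (fun a => p a k), ?_⟩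
  ext k l
  rw [h]
  simp [Matrix.mul_apply, Matrix.J, Matrix.fromBlocks, Matrix.one_apply, Fintype.sum_sum_type,
    Finset.sum_sub_distrib, Matrix.neg_apply]
  ring

lemma homogenize {σ τ : Type} (P : MvPolynomial τ ℂ) (b : MvPolynomial σ ℂ)
    (M : τ → MvPolynomial σ ℂ) :
    ∃ (k : ℕ) (a : MvPolynomial σ ℂ), ∀ y, eval y b ≠ 0 →
      eval (fun p => eval y (M p) / eval y b) P * (eval y b) ^ k = eval y a := by
  induction P using MvPolynomial.induction_on with
  | C c => exact ⟨0, C c, fun y _ => by simp⟩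
  | add p q hp hq =>
    obtain ⟨k, a, h⟩ := hp
    obtain ⟨k', a', h'⟩ := hq
    refine ⟨k + k', a * b ^ k' + a' * b ^ k, fun y hy => ?_⟩
    simp only [map_add, map_mul, map_pow, ← h y hy, ← h' y hy]
    ring
  | mul_X p i hp =>
    obtain ⟨k, a, h⟩ := hp
    refine ⟨k + 1, a * M i, fun y hy => ?_⟩
    simp only [map_mul, eval_X, ← h y hy]
    field_simp
    ring

lemma exists_section (n : ℕ) :
    ∃ (b : MvPolynomial ((Fin n ⊕ Fin n) × (Fin n ⊕ Fin n)) ℂ)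
      (M : (Fin n ⊕ Fin n) × (Fin n ⊕ Fin n) →
        MvPolynomial ((Fin n ⊕ Fin n) × (Fin n ⊕ Fin n)) ℂ), b ≠ 0 ∧
      ∀ y, eval y b ≠ 0 →
        Matrix.of (fun i j => eval y (M (i, j)) / eval y b) * Matrix.J (Fin n) ℂ *
          (Matrix.of (fun i j => eval y (M (i, j)) / eval y b)).transpose
          = Matrix.of (fun i j => y (i, j) - y (j, i)) := by
  set R := MvPolynomial ((Fin n ⊕ Fin n) × (Fin n ⊕ Fin n)) ℂ with hR
  let K := FractionRing R
  have : CharZero K := charZero_of_injective_algebraMap (IsFractionRing.injective R K)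
  let f : R →+* K := algebraMap R K
  have hf : Function.Injective f := IsFractionRing.injective R K
  obtain ⟨M0, hM0⟩ := darboux_matrix (K := K) n
    (Matrix.of fun i j => f (X (i, j) - X (j, i))) (by intro k l; simp)
  obtain ⟨b, hb⟩ := IsLocalization.exist_integer_multiples_of_finite (nonZeroDivisors R)
    (fun p : (Fin n ⊕ Fin n) × (Fin n ⊕ Fin n) => M0 p.1 p.2)
  choose M hM using hb
  refine ⟨b, M, nonZeroDivisors.ne_zero b.2, fun y hy => ?_⟩
  have key : (Matrix.of fun i j => M (i, j)) * Matrix.J (Fin n) R *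
      (Matrix.of fun i j => M (i, j)).transpose
      = ((b : R) ^ 2) • Matrix.of fun i j => (X (i, j) - X (j, i) : R) := by
    apply Matrix.map_injective hf
    have h1 : (Matrix.of fun i j => M (i, j)).map f = f b • M0 := by
      ext i j
      have := hM (i, j)
      simp only [Matrix.map_apply, Matrix.of_apply, Matrix.smul_apply, smul_eq_mul]
      simpa [Algebra.smul_def] using this
    beta_reduce
    rw [Matrix.map_mul, Matrix.map_mul, Matrix.map_J, Matrix.transpose_map, h1]
    rw [Matrix.transpose_smul, Matrix.smul_mul, Matrix.smul_mul, Matrix.mul_smul, hM0]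
    ext i j
    simp
    ring
  have key2 := congrArg (fun Z : Matrix _ _ R => Z.map (eval y)) key
  beta_reduce at key2
  rw [Matrix.map_mul, Matrix.map_mul, Matrix.map_J, Matrix.transpose_map] at key2
  have h2 : Matrix.of (fun i j => eval y (M (i, j)) / eval y (b : R))
      = (eval y (b : R))⁻¹ • (Matrix.of fun i j => M (i, j)).map (eval y) := by
    ext i j; simp [div_eq_inv_mul]
  rw [h2, Matrix.transpose_smul, Matrix.smul_mul, Matrix.smul_mul, Matrix.mul_smul, key2]
  ext i j
  simp
  field_simp

lemma eval_of_gram (n : ℕ)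
    (P : MvPolynomial ((Fin n ⊕ Fin n) × (Fin n ⊕ Fin n)) ℂ) (hP : Inv n P)
    (M T : Matrix (Fin n ⊕ Fin n) (Fin n ⊕ Fin n) ℂ)
    (h : T * Matrix.J (Fin n) ℂ * T.transpose = M * Matrix.J (Fin n) ℂ * M.transpose)
    (hdet : (M * Matrix.J (Fin n) ℂ * M.transpose).det ≠ 0) :
    eval (fun p => T p.1 p.2) P = eval (fun p => M p.1 p.2) P := by
  have hM : IsUnit M.det := by
    rw [Matrix.det_mul, Matrix.det_mul] at hdet
    exact isUnit_iff_ne_zero.2 fun h0 => hdet (by simp [h0])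
  have hM' : IsUnit M.transpose.det := by rwa [Matrix.det_transpose]
  have hS : M⁻¹ * T ∈ Matrix.symplecticGroup (Fin n) ℂ := by
    rw [SymplecticGroup.mem_iff, Matrix.transpose_mul]
    calc M⁻¹ * T * Matrix.J (Fin n) ℂ * (T.transpose * M⁻¹.transpose)
        = M⁻¹ * (T * Matrix.J (Fin n) ℂ * T.transpose) * M⁻¹.transpose := by
          simp only [Matrix.mul_assoc]
      _ = (M⁻¹ * M) * Matrix.J (Fin n) ℂ * (M.transpose * M⁻¹.transpose) := by
          rw [h]; simp only [Matrix.mul_assoc]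
      _ = _ := by
          rw [Matrix.nonsing_inv_mul _ hM, Matrix.transpose_nonsing_inv,
            Matrix.mul_nonsing_inv _ hM']
          simp
  have := hP _ (SymplecticGroup.transpose_mem hS) (fun i a => M i a)
  rw [← this]
  congr 2
  funext p
  have h3 : M * (M⁻¹ * T) = T := by
    rw [← Matrix.mul_assoc, Matrix.mul_nonsing_inv _ hM, Matrix.one_mul]
  conv_lhs => rw [← h3]
  simp only [Matrix.mul_apply (M := M), Matrix.mulVec, dotProduct, Matrix.transpose_apply]
  exact Finset.sum_congr rfl fun _ _ => mul_comm _ _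

lemma square_case (n : ℕ)
    (P : MvPolynomial ((Fin n ⊕ Fin n) × (Fin n ⊕ Fin n)) ℂ) (hP : Inv n P) :
    P ∈ Adj n (Fin n ⊕ Fin n) := by
  obtain ⟨b, M1, hb0, hsec⟩ := exists_section n
  obtain ⟨k, a, hka⟩ := homogenize P b M1
  let D : MvPolynomial ((Fin n ⊕ Fin n) × (Fin n ⊕ Fin n)) ℂ :=
    (Matrix.of fun i j : Fin n ⊕ Fin n =>
      (X (i, j) - X (j, i) : MvPolynomial ((Fin n ⊕ Fin n) × (Fin n ⊕ Fin n)) ℂ)).det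
  have hD : ∀ y, eval y D = (Matrix.of fun i j : Fin n ⊕ Fin n => y (i, j) - y (j, i)).det := by
    intro y
    rw [RingHom.map_det]
    congr 1
    ext i j
    simp
  have hD0 : D ≠ 0 := by
    intro h0
    have h1 := hD (fun p => Matrix.J (Fin n) ℂ p.1 p.2 / 2)
    rw [h0, map_zero] at h1
    have h2 : (Matrix.of fun i j : Fin n ⊕ Fin n =>
        Matrix.J (Fin n) ℂ i j / 2 - Matrix.J (Fin n) ℂ j i / 2) = Matrix.J (Fin n) ℂ := by
      ext i j
      have := congrFun (congrFun (Matrix.J_transpose (Fin n) ℂ) i) j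
      simp only [Matrix.transpose_apply, Matrix.neg_apply] at this
      simp only [Matrix.of_apply, this]
      ring
    simp only [h2] at h1
    exact (Matrix.isUnit_det_J (Fin n) ℂ).ne_zero h1.symm
  let φ : MvPolynomial ((Fin n ⊕ Fin n) × (Fin n ⊕ Fin n)) ℂ →ₐ[ℂ]
      MvPolynomial (((Fin n ⊕ Fin n) × (Fin n ⊕ Fin n)) ⊕
        ((Fin n ⊕ Fin n) × (Fin n ⊕ Fin n))) ℂ :=
    aeval (fun p => C (1 / 2) * rename Sum.inl (qq n p.1 p.2) + X (Sum.inr p)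
      + X (Sum.inr p.swap))
  have hφ : ∀ x f, eval x (φ f) = eval (fun p => 1 / 2 * eval (x ∘ Sum.inl) (qq n p.1 p.2)
      + x (Sum.inr p) + x (Sum.inr p.swap)) f := by
    intro x f
    induction f using MvPolynomial.induction_on with
    | C c => simp [φ]
    | add p q hp hq => simp only [map_add, hp, hq]
    | mul_X p i hp =>
      simp only [map_mul, hp, eval_X]
      congr 1
      simp [φ, eval_rename]
  obtain ⟨c, hc⟩ := descent φ (by
      intro y
      obtain ⟨M, hM⟩ := darboux_matrix n
        (Matrix.of fun i j : Fin n ⊕ Fin n => y (i, j) - y (j, i)) (by intro k l; simp)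
      refine ⟨Sum.elim (fun p => M p.1 p.2) (fun p => (y p + y p.swap) / 4), fun f => ?_⟩
      rw [hφ]
      congr 2
      funext p
      rw [Sum.elim_comp_inl, eval_qq]
      have h1 : (Matrix.of fun i a => M i a) = M := rfl
      simp only [h1, hM]
      simp only [Matrix.of_apply, Sum.elim_inr, Prod.swap_swap]
      simp only [Prod.mk.eta, Prod.swap]
      ring)
    (rename Sum.inl P) (b ^ k * b * D) (by
      exact mul_ne_zero (mul_ne_zero (pow_ne_zero _ hb0) hb0) hD0)
    (a * b * D) (by
      refine MvPolynomial.funext fun x => ?_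
      rw [map_mul (eval x) (rename Sum.inl P), hφ, hφ, eval_rename]
      set y : (Fin n ⊕ Fin n) × (Fin n ⊕ Fin n) → ℂ := fun p =>
        1 / 2 * eval (x ∘ Sum.inl) (qq n p.1 p.2) + x (Sum.inr p) + x (Sum.inr p.swap) with hy
      simp only [map_mul, map_pow]
      by_cases hby : eval y b = 0
      · simp [hby]
      by_cases hDy : eval y D = 0
      · simp [hDy]
      let M : Matrix (Fin n ⊕ Fin n) (Fin n ⊕ Fin n) ℂ :=
        Matrix.of fun i a => (x ∘ Sum.inl) (i, a)
      have hyM : (Matrix.of fun i j : Fin n ⊕ Fin n => y (i, j) - y (j, i))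
          = M * Matrix.J (Fin n) ℂ * M.transpose := by
        ext i j
        have h4 := mul_J_mul_transpose_skew M i j
        simp only [Matrix.of_apply, hy, eval_qq]
        change 1 / 2 * (M * Matrix.J (Fin n) ℂ * M.transpose) i j + _ + _
          - (1 / 2 * (M * Matrix.J (Fin n) ℂ * M.transpose) j i + _ + _) = _
        simp only [Prod.swap]
        linear_combination (-1 / 2) * h4
      rw [← hka y hby]
      have h5 := eval_of_gram n P hP M _ ((hsec y hby).trans hyM) (by
        rw [← hyM, ← hD]; exact hDy)
      have h6 : eval (fun p => eval y (M1 p) / eval y b) P = eval (x ∘ Sum.inl) P := h5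
      rw [h6]
      ring)
  let ψ : MvPolynomial (((Fin n ⊕ Fin n) × (Fin n ⊕ Fin n)) ⊕
        ((Fin n ⊕ Fin n) × (Fin n ⊕ Fin n))) ℂ →ₐ[ℂ]
        MvPolynomial ((Fin n ⊕ Fin n) × (Fin n ⊕ Fin n)) ℂ :=
    aeval (Sum.elim X (fun _ => 0))
  have h7 : P = ψ (φ c) := by
    rw [← hc]
    simp only [ψ, aeval_rename, Sum.elim_comp_inl, aeval_X_left_apply]
  have h8 : ∀ i, ψ (φ (X i)) = (1 / 2 : ℂ) • qq n i.1 i.2 := by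
    intro i
    simp only [φ, ψ, aeval_X, map_add, map_mul, aeval_rename, Sum.elim_comp_inl,
      aeval_X_left_apply, Sum.elim_inr, algHom_C, algebraMap_eq, smul_eq_C_mul, add_zero]
  rw [h7]
  clear h7 hc
  induction c using MvPolynomial.induction_on with
  | C c => simpa [φ, ψ] using (Adj n (Fin n ⊕ Fin n)).algebraMap_mem c
  | add p q hp hq => simp only [map_add]; exact add_mem hp hq
  | mul_X p i hp =>
    simp only [map_mul]
    refine mul_mem hp ?_
    rw [h8]
    exact (Adj n _).smul_mem (qq_mem n _ _) _

/-! ### Passing to an arbitrary number of copies -/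

section General
set_option linter.unusedSectionVars false
variable {n : ℕ} {ι κ : Type} [Fintype ι] [Fintype κ]

/-- Linear substitution on the copies. -/
noncomputable def csub (n : ℕ) (h : κ → ι → ℂ) :
    MvPolynomial (ι × (Fin n ⊕ Fin n)) ℂ →ₐ[ℂ] MvPolynomial (κ × (Fin n ⊕ Fin n)) ℂ :=
  lsub (fun p q => if p.2 = q.2 then h q.1 p.1 else 0)

lemma eval_csub (h : κ → ι → ℂ) (f : MvPolynomial (ι × (Fin n ⊕ Fin n)) ℂ)
    (x : κ × (Fin n ⊕ Fin n) → ℂ) :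
    eval x (csub n h f) = eval (fun p => ∑ k, h k p.1 * x (k, p.2)) f := by
  rw [csub, eval_lsub]
  congr 2
  funext p
  rw [Fintype.sum_prod_type]
  simp

lemma fischer_csub (h : κ → ι → ℂ) (f : MvPolynomial (ι × (Fin n ⊕ Fin n)) ℂ)
    (g : MvPolynomial (κ × (Fin n ⊕ Fin n)) ℂ) :
    fischer (csub n h f) g = fischer f (csub n (fun i k => h k i) g) := by
  have h1 : (fun (q : κ × (Fin n ⊕ Fin n)) (p : ι × (Fin n ⊕ Fin n)) =>
      if p.2 = q.2 then h q.1 p.1 else 0) = fun q p => if q.2 = p.2 then h q.1 p.1 else 0 := by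
    funext p q
    simp only [eq_comm]
  rw [csub, fischer_lsub, csub, h1]

lemma csub_qq (h : κ → ι → ℂ) (i j : ι) :
    csub n h (qq n i j) = ∑ k, ∑ k', (h k i * h k' j) • qq n k k' := by
  refine MvPolynomial.funext fun x => ?_
  rw [eval_csub, eval_qq]
  have h1 : (Matrix.of fun (i : ι) a => ∑ k, h k i * x (k, a))
      = (Matrix.of h).transpose * Matrix.of (fun k a => x (k, a)) := by
    ext i a
    simp [Matrix.mul_apply]
  rw [h1]
  have h2 : (Matrix.of h).transpose * Matrix.of (fun k a => x (k, a)) * Matrix.J (Fin n) ℂ *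
      ((Matrix.of h).transpose * Matrix.of (fun k a => x (k, a))).transpose
      = (Matrix.of h).transpose * ((Matrix.of (fun k a => x (k, a)) * Matrix.J (Fin n) ℂ *
        (Matrix.of (fun k a => x (k, a))).transpose) * Matrix.of h) := by
    simp only [Matrix.transpose_mul, Matrix.transpose_transpose, Matrix.mul_assoc]
  rw [h2, Matrix.mul_apply]
  simp only [Matrix.mul_apply (N := Matrix.of h), ← eval_qq, map_sum, smul_eval,
    Matrix.transpose_apply, Matrix.of_apply, Finset.mul_sum]
  exact Finset.sum_congr rfl fun _ _ => Finset.sum_congr rfl fun _ _ => by ring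

lemma csub_mem (h : κ → ι → ℂ) (f : MvPolynomial (ι × (Fin n ⊕ Fin n)) ℂ)
    (hf : f ∈ Adj n ι) : csub n h f ∈ Adj n κ := by
  have hle : Adj n ι ≤ (Adj n κ).comap (csub n h) := by
    refine Algebra.adjoin_le ?_
    rintro _ ⟨p, rfl⟩
    change csub n h (qq n p.1 p.2) ∈ Adj n κ
    rw [csub_qq]
    exact sum_mem fun k _ => sum_mem fun k' _ => (Adj n κ).smul_mem (qq_mem n _ _) _
  exact hle hf

lemma totalDegree_conjP {σ : Type} [Fintype σ] (f : MvPolynomial σ ℂ) :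
    (conjP f).totalDegree ≤ f.totalDegree :=
  Finset.sup_mono (support_map_subset (starRingEnd ℂ) f)

lemma conjP_qq (i j : ι) : conjP (qq n i j) = qq n i j := by
  have h : ∀ a b, (starRingEnd ℂ) (Matrix.J (Fin n) ℂ a b) = Matrix.J (Fin n) ℂ a b := by
    intro a b
    have := congrFun (congrFun (Matrix.map_J (l := Fin n) (starRingEnd ℂ)) a) b
    simpa using this
  simp only [conjP, qq, map_sum, map_mul, map_C, map_X, h]

lemma conjP_mem (f : MvPolynomial (ι × (Fin n ⊕ Fin n)) ℂ)
    (hf : f ∈ Adj n ι) : conjP f ∈ Adj n ι := by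
  induction hf using Algebra.adjoin_induction with
  | mem x hx =>
    obtain ⟨p, rfl⟩ := hx
    change conjP (qq n p.1 p.2) ∈ _
    rw [conjP_qq]
    exact qq_mem n _ _
  | algebraMap r =>
    rw [algebraMap_eq, conjP, map_C]
    exact (Adj n ι).algebraMap_mem _
  | add x y _ _ hx hy => rw [map_add]; exact add_mem hx hy
  | mul x y _ _ hx hy => rw [map_mul]; exact mul_mem hx hy

lemma csub_inv (h : κ → ι → ℂ) (f : MvPolynomial (ι × (Fin n ⊕ Fin n)) ℂ)
    (hf : Inv n f) : Inv n (csub n h f) := by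
  intro S hS v
  rw [eval_csub, eval_csub]
  have := hf S hS (fun i a => ∑ k, h k i * v k a)
  rw [← this]
  congr 2
  funext p
  simp only [Matrix.mulVec, dotProduct, Finset.mul_sum]
  rw [Finset.sum_comm]
  exact Finset.sum_congr rfl fun _ _ => Finset.sum_congr rfl fun _ _ => by ring

lemma qq_inv (i j : ι) : Inv n (qq n i j) := by
  intro S hS v
  rw [eval_qq, eval_qq]
  have h1 : (Matrix.of fun (i : ι) a => S.mulVec (v i) a)
      = Matrix.of (fun i a => v i a) * S.transpose := by
    ext i a
    simp only [Matrix.of_apply, Matrix.mulVec, dotProduct, Matrix.mul_apply,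
      Matrix.transpose_apply]
    exact Finset.sum_congr rfl fun _ _ => mul_comm _ _
  simp only [h1, Matrix.transpose_mul, Matrix.transpose_transpose]
  have h2 := SymplecticGroup.mem_iff'.1 hS
  have h3 : Matrix.of (fun i a => v i a) * S.transpose * Matrix.J (Fin n) ℂ *
      (S * (Matrix.of fun i a => v i a).transpose)
      = Matrix.of (fun i a => v i a) * (S.transpose * Matrix.J (Fin n) ℂ * S) *
        (Matrix.of fun i a => v i a).transpose := by
    simp only [Matrix.mul_assoc]
  rw [h3, h2]

lemma adj_inv (f : MvPolynomial (ι × (Fin n ⊕ Fin n)) ℂ)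
    (hf : f ∈ Adj n ι) : Inv n f := by
  intro S hS v
  induction hf using Algebra.adjoin_induction with
  | mem x hx =>
    obtain ⟨p, rfl⟩ := hx
    exact qq_inv p.1 p.2 S hS v
  | algebraMap r => simp [algebraMap_eq]
  | add x y _ _ hx hy => simp only [map_add, hx, hy]
  | mul x y _ _ hx hy => simp only [map_mul, hx, hy]

theorem general (P : MvPolynomial (ι × (Fin n ⊕ Fin n)) ℂ) (hP : Inv n P) : P ∈ Adj n ι := by
  let W : Submodule ℂ (MvPolynomial (ι × (Fin n ⊕ Fin n)) ℂ) :=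
    Subalgebra.toSubmodule (Adj n ι) ⊓ restrictTotalDegree _ ℂ P.totalDegree
  have hfin : FiniteDimensional ℂ W :=
    Submodule.finiteDimensional_of_le (S₂ := restrictTotalDegree _ ℂ P.totalDegree) inf_le_right
  let T : W →ₗ[ℂ] Module.Dual ℂ W := fischer.domRestrict₁₂ W W
  have hconj : ∀ f ∈ W, conjP f ∈ W := by
    intro f hf
    refine Submodule.mem_inf.2 ⟨conjP_mem f hf.1, ?_⟩
    rw [mem_restrictTotalDegree]
    exact (totalDegree_conjP _).trans ((mem_restrictTotalDegree _ _ _).1 hf.2)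
  have hinj : Function.Injective T := by
    rw [← LinearMap.ker_eq_bot, LinearMap.ker_eq_bot']
    intro w hw
    have h1 := congrArg (fun l : Module.Dual ℂ W => l ⟨conjP w.1, hconj _ w.2⟩) hw
    exact Subtype.ext (fischer_conj_eq_zero w.1 h1)
  have hsurj : Function.Surjective T :=
    (LinearMap.injective_iff_surjective_of_finrank_eq_finrank
      (Subspace.dual_finrank_eq).symm).1 hinj
  obtain ⟨w, hw⟩ := hsurj ((fischer P).domRestrict W)
  have horth : ∀ z ∈ W, fischer (P - w.1) z = 0 := by
    intro z hz
    have h1 := congrArg (fun l : Module.Dual ℂ W => l ⟨z, hz⟩) hw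
    have h2 : fischer w.1 z = fischer P z := h1
    rw [map_sub, LinearMap.sub_apply, h2, sub_self]
  set f := P - w.1 with hfdef
  have hfinv : Inv n f := by
    intro S hS v
    simp only [hfdef, map_sub, hP S hS v, adj_inv w.1 w.2.1 S hS v]
  have hfdeg : f.totalDegree ≤ P.totalDegree :=
    (mem_restrictTotalDegree _ _ _).1 (Submodule.sub_mem _
      ((mem_restrictTotalDegree _ _ _).2 le_rfl) w.2.2)
  have hzero : ∀ h : (Fin n ⊕ Fin n) → ι → ℂ, csub n h f = 0 := by
    intro h
    apply fischer_conj_eq_zero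
    rw [fischer_csub]
    refine horth _ (Submodule.mem_inf.2 ⟨?_, ?_⟩)
    · exact csub_mem _ _ (conjP_mem _ (square_case n _ (csub_inv h f hfinv)))
    · rw [mem_restrictTotalDegree]
      exact (totalDegree_lsub _ _).trans ((totalDegree_conjP _).trans
        ((totalDegree_lsub _ _).trans hfdeg))
  have hf0 : f = 0 := by
    refine MvPolynomial.funext fun x => ?_
    have h1 := congrArg (eval (fun p : (Fin n ⊕ Fin n) × (Fin n ⊕ Fin n) =>
      if p.1 = p.2 then (1 : ℂ) else 0)) (hzero (fun a i => x (i, a)))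
    rw [eval_csub] at h1
    simpa using h1
  have : P = w.1 := sub_eq_zero.1 hf0
  rw [this]
  exact w.2.1

end General

end SpFFT

/-- First fundamental theorem of invariant theory for `Sp(2n, ℂ)`: the invariants of the
diagonal action on `N` copies of the standard representation are generated as a
`ℂ`-algebra by the quadratic symplectic pairings `q_{ij} = ω(v_i, v_j)`, `i < j`. -/
theorem stmt7 (n N : ℕ) (P : MvPolynomial (Fin N × (Fin n ⊕ Fin n)) ℂ)
    (hP : IsSpInvariant n N P) :
    P ∈ Algebra.adjoin ℂ
      {Q | ∃ i j : Fin N, i < j ∧ Q = sympPairPoly n N i j} := by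
  have h := SpFFT.general (ι := Fin N) P hP
  refine (Algebra.adjoin_le ?_ : SpFFT.Adj n (Fin N) ≤ _) h
  have hskew : ∀ i j : Fin N, sympPairPoly n N i j = - sympPairPoly n N j i := by
    intro i j
    refine MvPolynomial.funext fun x => ?_
    rw [map_neg]
    change eval x (SpFFT.qq n i j) = - eval x (SpFFT.qq n j i)
    rw [SpFFT.eval_qq, SpFFT.eval_qq, SpFFT.mul_J_mul_transpose_skew]
  rintro _ ⟨⟨i, j⟩, rfl⟩
  change sympPairPoly n N i j ∈ Algebra.adjoin ℂ _
  rcases lt_trichotomy i j with hij | hij | hij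
  · exact Algebra.subset_adjoin ⟨i, j, hij, rfl⟩
  · subst hij
    rw [self_eq_neg.1 (hskew i i)]
    exact zero_mem _
  · rw [hskew]
    exact neg_mem (Algebra.subset_adjoin ⟨j, i, hij, rfl⟩)
end

section
/- Let Sp(2n, ℂ) act diagonally on Sym(V) ⊗ Λ(U) where V and U are finite direct sums of copies of the standard representation ℂ^{2n}. Then the invariant superalgebra (Sym(V) ⊗ Λ(U))^{Sp(2n)} is generated by quadratic elements: the symplectic pairings between two (distinct, if both in V) copies of ℂ^{2n} occurring in V or in U. -/
open MvPolynomial TensorProduct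

/-- `U = (ℂ^{2n})^{⊕2r}`, realized as functions on `Fin (2r) × (Fin n ⊕ Fin n)`. -/
abbrev UMod (n r : ℕ) := (Fin (2 * r) × (Fin n ⊕ Fin n)) → ℂ

/-- `Sym(V) ⊗ Λ(U)` with `V = (ℂ^{2n})^{⊕m}`, `U = (ℂ^{2n})^{⊕2r}`. -/
abbrev SymTensorExt (n m r : ℕ) :=
  TensorProduct ℂ (MvPolynomial (Fin m × (Fin n ⊕ Fin n)) ℂ) (ExteriorAlgebra ℂ (UMod n r))

/-- The diagonal action of a `2n × 2n` matrix on `U`. -/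
noncomputable def matActU (n r : ℕ) (S : Matrix (Fin n ⊕ Fin n) (Fin n ⊕ Fin n) ℂ) :
    UMod n r →ₗ[ℂ] UMod n r where
  toFun u := fun p => ∑ a : Fin n ⊕ Fin n, S p.2 a * u (p.1, a)
  map_add' u v := by
    funext p
    simp [mul_add, Finset.sum_add_distrib]
  map_smul' c u := by
    funext p
    simp only [Pi.smul_apply, smul_eq_mul, RingHom.id_apply, Finset.mul_sum]
    exact Finset.sum_congr rfl fun a _ => by ring

/-- The diagonal action of `S` on `Sym(V) ⊗ Λ(U)` by algebra homomorphisms. -/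
noncomputable def rho (n m r : ℕ) (S : Matrix (Fin n ⊕ Fin n) (Fin n ⊕ Fin n) ℂ) :
    SymTensorExt n m r →ₐ[ℂ] SymTensorExt n m r :=
  Algebra.TensorProduct.map
    (aeval fun p : Fin m × (Fin n ⊕ Fin n) =>
      ∑ b : Fin n ⊕ Fin n, C (S b p.2) * X (p.1, b))
    (ExteriorAlgebra.map (matActU n r S))

/-- The standard basis vector of the `j`-th copy of `ℂ^{2n}` inside `U`. -/
noncomputable def eU (n r : ℕ) (j : Fin (2 * r)) (b : Fin n ⊕ Fin n) : UMod n r :=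
  Pi.single (j, b) 1

/-- The symplectic pairing between the `i`-th and `j`-th copies of `ℂ^{2n}` in `V`. -/
noncomputable def qVV (n m r : ℕ) (i j : Fin m) : SymTensorExt n m r :=
  (∑ a : Fin n ⊕ Fin n, ∑ b : Fin n ⊕ Fin n,
    C (Matrix.J (Fin n) ℂ a b) * X (i, a) * X (j, b)) ⊗ₜ 1

/-- The symplectic pairing between the `i`-th copy of `ℂ^{2n}` in `V` and the `j`-th copy
in `U`. -/
noncomputable def qVU (n m r : ℕ) (i : Fin m) (j : Fin (2 * r)) : SymTensorExt n m r :=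
  ∑ a : Fin n ⊕ Fin n, ∑ b : Fin n ⊕ Fin n,
    Matrix.J (Fin n) ℂ a b • ((X (i, a) : MvPolynomial (Fin m × (Fin n ⊕ Fin n)) ℂ)
      ⊗ₜ ExteriorAlgebra.ι ℂ (eU n r j b))

/-- The symplectic pairing between the `i`-th and `j`-th copies of `ℂ^{2n}` in `U`
(including `i = j`). -/
noncomputable def qUU (n m r : ℕ) (i j : Fin (2 * r)) : SymTensorExt n m r :=
  ∑ a : Fin n ⊕ Fin n, ∑ b : Fin n ⊕ Fin n,
    Matrix.J (Fin n) ℂ a b • ((1 : MvPolynomial (Fin m × (Fin n ⊕ Fin n)) ℂ)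
      ⊗ₜ (ExteriorAlgebra.ι ℂ (eU n r i a) * ExteriorAlgebra.ι ℂ (eU n r j b)))

/-- The invariant subalgebra `(Sym(V) ⊗ Λ(U))^{Sp(2n)}`. -/
noncomputable def spInvariants (n m r : ℕ) : Subalgebra ℂ (SymTensorExt n m r) where
  carrier := {x | ∀ S ∈ Matrix.symplecticGroup (Fin n) ℂ, rho n m r S x = x}
  mul_mem' hx hy := fun S hS => by rw [map_mul, hx S hS, hy S hS]
  add_mem' hx hy := fun S hS => by rw [map_add, hx S hS, hy S hS]
  algebraMap_mem' c := fun S hS => (rho n m r S).commutes c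

set_option linter.unusedSectionVars false

/-- Creation / annihilation operators on an algebra. -/
structure FockData (A S W : Type) [Ring A] [Algebra ℂ A] [DecidableEq S] [DecidableEq W] where
  g : S → W → A
  c : S → W → A →ₗ[ℂ] A
  η : S → S → ℂ
  η_symm : ∀ s t, η s t = η t s
  η_sq : ∀ s t, η s t * η s t = 1
  gg : ∀ s a t b, g s a * g t b = η s t • (g t b * g s a)
  cg : ∀ s a t b f, c s a (g t b * f) =
    η s t • (g t b * c s a f) + (if s = t ∧ a = b then f else 0)
  cc : ∀ s a t b f, c s a (c t b f) = η s t • c t b (c s a f)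
  c1 : ∀ s a, c s a 1 = 0

namespace FockData

variable {A S W : Type} [Ring A] [Algebra ℂ A] [Fintype S] [Fintype W] [DecidableEq S]
  [DecidableEq W] (K : FockData A S W)

/-- The `gl(W)` action. -/
noncomputable def E (a b : W) : A →ₗ[ℂ] A :=
  ∑ s, (LinearMap.mulLeft ℂ (K.g s a)) ∘ₗ K.c s b

lemma E_apply (a b : W) (f : A) : K.E a b f = ∑ s, K.g s a * K.c s b f := by
  simp [E, LinearMap.sum_apply]

lemma E_one (a b : W) : K.E a b 1 = 0 := by simp [E_apply, K.c1]

lemma E_g (a b : W) (s : S) (d : W) (f : A) :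
    K.E a b (K.g s d * f) = K.g s d * K.E a b f + (if b = d then K.g s a * f else 0) := by
  rw [E_apply, E_apply]
  simp only [K.cg, mul_add, Finset.sum_add_distrib, Finset.mul_sum]
  congr 1
  · refine Finset.sum_congr rfl fun t _ => ?_
    rw [mul_smul_comm, ← mul_assoc, K.gg t a s d, smul_mul_assoc, smul_smul, K.η_sq, one_smul,
      mul_assoc]
  · by_cases h : b = d
    · simp [h]
    · simp [h]

lemma E_c (a b : W) (s : S) (d : W) (f : A) :
    K.E a b (K.c s d f) = K.c s d (K.E a b f) - (if a = d then K.c s b f else 0) := by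
  rw [E_apply, E_apply, map_sum]
  simp only [K.cg, Finset.sum_add_distrib]
  have : ∑ x, (if s = x ∧ d = a then K.c x b f else 0) = if a = d then K.c s b f else 0 := by
    by_cases h : a = d
    · simp [h]
    · simp [h, Ne.symm h]
  rw [this, add_sub_cancel_right]
  refine Finset.sum_congr rfl fun t _ => ?_
  rw [K.cc t b s d, mul_smul_comm, K.η_symm]

lemma E_E (a b c d : W) (f : A) :
    K.E b a (K.E c d f) = ∑ s, ∑ t, K.η s t • (K.g s b * K.g t c * K.c s a (K.c t d f))
      + (if a = c then K.E b d f else 0) := by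
  rw [E_apply]
  simp only [E_apply, map_sum, K.cg, Finset.sum_add_distrib, mul_add, Finset.mul_sum]
  congr 1
  · refine Finset.sum_congr rfl fun t _ => Finset.sum_congr rfl fun s _ => ?_
    rw [mul_smul_comm, mul_assoc]
  · by_cases h : a = c
    · simp [h]
    · simp [h]

/-- Shifted Casimir. -/
noncomputable def T : A →ₗ[ℂ] A := (∑ a, ∑ b, K.E b a ∘ₗ K.E a b) + ∑ a, K.E a a

lemma T_apply (f : A) : K.T f = (∑ a, ∑ b, K.E b a (K.E a b f)) + ∑ a, K.E a a f := by
  simp [T, LinearMap.sum_apply]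

/-- quadratic element -/
noncomputable def q (J : Matrix W W ℂ) (s t : S) : A := ∑ a, ∑ b, J a b • (K.g s a * K.g t b)

/-- contraction -/
noncomputable def Δ (J : Matrix W W ℂ) (s t : S) : A →ₗ[ℂ] A :=
  ∑ a, ∑ b, J a b • (K.c s a ∘ₗ K.c t b)

lemma Δ_apply (J : Matrix W W ℂ) (s t : S) (f : A) :
    K.Δ J s t f = ∑ a, ∑ b, J a b • K.c s a (K.c t b f) := by
  simp [Δ, LinearMap.sum_apply]

/-- sp element -/
noncomputable def F (J : Matrix W W ℂ) (a c : W) : A →ₗ[ℂ] A := ∑ b, J c b • K.E a b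

lemma F_apply (J : Matrix W W ℂ) (a c : W) (f : A) : K.F J a c f = ∑ b, J c b • K.E a b f := by
  simp [F, LinearMap.sum_apply]

/-- Lie algebra invariants. -/
noncomputable def I (J : Matrix W W ℂ) : Submodule ℂ A where
  carrier := {f | ∀ a c, K.F J a c f + K.F J c a f = 0}
  add_mem' := by
    intro f h hf hh a c
    have h1 := hf a c
    have h2 := hh a c
    rw [map_add, map_add, add_add_add_comm, h1, h2, add_zero]
  zero_mem' := by intro a c; simp
  smul_mem' := by
    intro r f hf a c
    rw [map_smul, map_smul, ← smul_add, hf a c, smul_zero]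

lemma one_mem_I (J : Matrix W W ℂ) : (1 : A) ∈ K.I J := by
  intro a c; simp [F_apply, E_one]

open Matrix in
lemma T_of_mem_I (J : Matrix W W ℂ) (hJ : Jᵀ * J = 1) (hJ' : Jᵀ = -J) (f : A) (hf : f ∈ K.I J) :
    K.T f = ∑ s, ∑ t, K.η s t • (K.q J s t * K.Δ J s t f) := by
  have hJs : ∀ b d, ∑ a, J a b * J a d = if b = d then 1 else 0 := by
    intro b d
    have := congrFun (congrFun hJ b) d
    simpa [Matrix.mul_apply, Matrix.one_apply] using this
  have hskew : ∀ a b, J a b = - J b a := by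
    intro a b
    have := congrFun (congrFun hJ' b) a
    simpa using this
  have h1 : ∀ a b, K.E a b f = - ∑ c, ∑ d, (J c b * J a d) • K.E c d f := by
    intro a b
    have e1 : K.E a b f = ∑ c, J c b • K.F J a c f := by
      simp only [F_apply, Finset.smul_sum, smul_smul]
      rw [Finset.sum_comm]
      simp only [← Finset.sum_smul, hJs]
      simp
    rw [e1, ← Finset.sum_neg_distrib]
    refine Finset.sum_congr rfl fun c _ => ?_
    rw [eq_neg_of_add_eq_zero_left (hf a c), F_apply]
    simp only [Finset.smul_sum, smul_smul, smul_neg]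
  rw [T_apply]
  have h2 : ∑ a, ∑ b, K.E b a (K.E a b f) =
      - ∑ a, ∑ b, ∑ c, ∑ d, (J c b * J a d) • K.E b a (K.E c d f) := by
    rw [← Finset.sum_neg_distrib]
    refine Finset.sum_congr rfl fun a _ => ?_
    rw [← Finset.sum_neg_distrib]
    refine Finset.sum_congr rfl fun b _ => ?_
    rw [h1 a b]
    simp only [map_neg, map_sum, map_smul]
  rw [h2]
  simp only [E_E, smul_add, Finset.sum_add_distrib]
  have h3 : ∑ a, ∑ b, ∑ c, ∑ d, (J c b * J a d) • (if a = c then K.E b d f else 0)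
      = ∑ a, K.E a a f := by
    have : ∀ a b, ∑ c, ∑ d, (J c b * J a d) • (if a = c then K.E b d f else 0)
        = ∑ d, (J a b * J a d) • K.E b d f := by
      intro a b
      rw [Finset.sum_comm]
      simp
    simp only [this]
    rw [Finset.sum_comm]
    refine Finset.sum_congr rfl fun b _ => ?_
    rw [Finset.sum_comm]
    simp only [← Finset.sum_smul, hJs]
    simp
  rw [h3, neg_add, neg_add_cancel_right]
  have h4 : ∀ s t, K.η s t • (K.q J s t * K.Δ J s t f) =
     ∑ a, ∑ b, ∑ c, ∑ d, -((J c b * J a d) • K.η s t • (K.g s b * K.g t c * K.c s a (K.c t d f))) := by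
    intro s t
    rw [q, Δ_apply]
    rw [Finset.mul_sum, Finset.smul_sum]
    refine Finset.sum_congr rfl fun a _ => ?_
    rw [Finset.sum_mul, Finset.smul_sum]
    refine Finset.sum_congr rfl fun b _ => ?_
    rw [Finset.sum_mul, Finset.smul_sum]
    refine Finset.sum_congr rfl fun c _ => ?_
    rw [Finset.mul_sum, Finset.smul_sum]
    refine Finset.sum_congr rfl fun d _ => ?_
    rw [hskew b c, smul_mul_smul_comm, smul_smul, smul_smul, ← neg_smul]
    congr 1; ring
  simp only [h4, ← Finset.sum_neg_distrib, Finset.smul_sum]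
  have h5 : ∀ X : S → S → W → W → W → W → A,
     ∑ a, ∑ b, ∑ c, ∑ d, ∑ s, ∑ t, X s t a b c d = ∑ s, ∑ t, ∑ a, ∑ b, ∑ c, ∑ d, X s t a b c d := by
    intro X
    simp only [← Fintype.sum_prod_type']
    let e : (W × W × W × W × S × S) ≃ (S × S × W × W × W × W) :=
      ⟨fun x => (x.2.2.2.2.1, x.2.2.2.2.2, x.1, x.2.1, x.2.2.1, x.2.2.2.1),
       fun x => (x.2.2.1, x.2.2.2.1, x.2.2.2.2.1, x.2.2.2.2.2, x.1, x.2.1),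
       fun _ => rfl, fun _ => rfl⟩
    exact Fintype.sum_equiv e _ _ fun _ => rfl
  exact h5 _

lemma Δ_mem_I (J : Matrix W W ℂ) (hJ' : ∀ a b, J a b = - J b a) (s t : S) (f : A)
    (hf : f ∈ K.I J) : K.Δ J s t f ∈ K.I J := by
  have hFc : ∀ a c s d f, K.F J a c (K.c s d f) = K.c s d (K.F J a c f) -
      (if a = d then ∑ b, J c b • K.c s b f else 0) := by
    intro a c s d f
    simp only [F_apply, E_c, smul_sub, Finset.sum_sub_distrib, map_sum, map_smul]
    congr 1
    split_ifs <;> simp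
  have hF : ∀ a c, K.F J a c (K.Δ J s t f) = K.Δ J s t (K.F J a c f)
      - ((∑ b, ∑ y, (J c b * J a y) • K.c s b (K.c t y f))
        - ∑ b, ∑ y, (J a b * J c y) • K.c s b (K.c t y f)) := by
    intro a c
    simp only [Δ_apply, map_sum, map_smul, hFc, map_sub, smul_sub, Finset.sum_sub_distrib]
    have e1 : ∑ x, ∑ y, J x y • (if a = x then ∑ b, J c b • K.c s b (K.c t y f) else 0)
        = ∑ b, ∑ y, (J c b * J a y) • K.c s b (K.c t y f) := by
      rw [Finset.sum_comm]
      simp only [smul_ite, smul_zero, Finset.sum_ite_eq, Finset.mem_univ, if_true,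
        Finset.smul_sum, smul_smul]
      rw [Finset.sum_comm]
      simp only [mul_comm]
    have e2 : ∑ x, ∑ y, J x y • K.c s x (if a = y then ∑ b, J c b • K.c t b f else 0)
        = - ∑ b, ∑ y, (J a b * J c y) • K.c s b (K.c t y f) := by
      rw [← Finset.sum_neg_distrib]
      refine Finset.sum_congr rfl fun x _ => ?_
      have : ∀ y, J x y • K.c s x (if a = y then ∑ b, J c b • K.c t b f else 0)
        = if a = y then J x y • ∑ b, J c b • K.c s x (K.c t b f) else 0 := by
        intro y; split_ifs <;> simp
      simp only [this, Finset.sum_ite_eq, Finset.mem_univ, if_true]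
      rw [hJ' x a, neg_smul]
      simp only [Finset.smul_sum, smul_smul]
    rw [e1, e2]
    abel
  intro a c
  rw [hF, hF]
  have := hf a c
  have h2 : K.Δ J s t (K.F J a c f) + K.Δ J s t (K.F J c a f) = 0 := by
    rw [← map_add, this, map_zero]
  rw [eq_neg_of_add_eq_zero_left h2]
  abel

end FockData

namespace FockData

variable {A S W : Type} [Ring A] [Algebra ℂ A] [Fintype S] [Fintype W] [DecidableEq S]
  [DecidableEq W] (K : FockData A S W)

/-- Span of words of length `k`. -/
noncomputable def Lev : ℕ → Submodule ℂ A
  | 0 => Submodule.span ℂ {1}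
  | k + 1 => ⨆ s, ⨆ a, (Lev k).map (LinearMap.mulLeft ℂ (K.g s a))

lemma g_mul_mem_Lev (k : ℕ) (s : S) (a : W) (f : A) (hf : f ∈ K.Lev k) :
    K.g s a * f ∈ K.Lev (k + 1) := by
  have h : (K.Lev k).map (LinearMap.mulLeft ℂ (K.g s a)) ≤ K.Lev (k + 1) :=
    le_iSup_of_le s (le_iSup_of_le a le_rfl)
  exact h ⟨f, hf, rfl⟩

open Matrix in
lemma exists_mat (k : ℕ) : ∃ (ι : Type) (_ : Fintype ι) (_ : DecidableEq ι) (w : ι → A)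
    (M : W → W → Matrix ι ι ℂ), Submodule.span ℂ (Set.range w) = K.Lev k ∧
      (∀ a b, (M a b)ᴴ = M b a) ∧ (∑ a, M a a = (k : ℂ) • (1 : Matrix ι ι ℂ)) ∧
      ∀ a b i, K.E a b (w i) = ∑ j, M a b j i • w j := by
  induction k with
  | zero =>
    refine ⟨Unit, inferInstance, inferInstance, fun _ => 1, fun _ _ => 0, ?_, ?_, ?_, ?_⟩
    · simp [Lev]
    · simp
    · simp
    · simp [E_one]
  | succ k ih =>
    obtain ⟨ι, _, _, w, M, hw, hM, hk, hE⟩ := ih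
    refine ⟨(S × W) × ι, inferInstance, inferInstance, fun x => K.g x.1.1 x.1.2 * w x.2,
      fun a b => Matrix.of fun y x => (if y.1 = x.1 then M a b y.2 x.2 else 0) +
        (if x.1.1 = y.1.1 ∧ x.1.2 = b ∧ y.1.2 = a ∧ x.2 = y.2 then 1 else 0), ?_, ?_, ?_, ?_⟩
    · apply le_antisymm
      · rw [Submodule.span_le]
        rintro _ ⟨⟨⟨s, a⟩, i⟩, rfl⟩
        apply g_mul_mem_Lev
        rw [← hw]
        exact Submodule.subset_span ⟨i, rfl⟩
      · refine iSup_le fun s => iSup_le fun a => ?_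
        rw [← hw, Submodule.map_span, Submodule.span_le]
        rintro _ ⟨_, ⟨i, rfl⟩, rfl⟩
        exact Submodule.subset_span ⟨((s, a), i), rfl⟩
    · intro a b
      ext y x
      simp only [Matrix.conjTranspose_apply, Matrix.of_apply, star_add]
      congr 1
      · rw [← hM a b]
        by_cases h : x.1 = y.1
        · simp [h]
        · simp [h, Ne.symm h]
      · have : (y.1.1 = x.1.1 ∧ y.1.2 = b ∧ x.1.2 = a ∧ y.2 = x.2) ↔
          (x.1.1 = y.1.1 ∧ x.1.2 = a ∧ y.1.2 = b ∧ x.2 = y.2) := by grind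
        simp only [this]
        split_ifs <;> simp
    · ext ⟨⟨t, b⟩, j⟩ ⟨⟨s, a⟩, i⟩
      have := congrFun (congrFun hk j) i
      simp only [Matrix.sum_apply, Matrix.of_apply, Finset.sum_add_distrib, Matrix.smul_apply] at this ⊢
      have e : ∑ x, (if (s = t ∧ a = x ∧ b = x ∧ i = j) then (1:ℂ) else 0)
          = (1 : Matrix ((S × W) × ι) ((S × W) × ι) ℂ) ((t, b), j) ((s, a), i) := by
        rw [Matrix.one_apply]
        by_cases h : s = t ∧ a = b ∧ i = j
        · obtain ⟨rfl, rfl, rfl⟩ := h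
          simp
        · rw [if_neg (by grind)]
          apply Finset.sum_eq_zero
          intro x _
          rw [if_neg (by grind)]
      rw [e]
      have e' : ∑ x, (if (t, b) = (s, a) then M x x j i else 0)
          = (k : ℂ) • (1 : Matrix ((S × W) × ι) ((S × W) × ι) ℂ) ((t, b), j) ((s, a), i) := by
        by_cases h : (t, b) = (s, a)
        · simp only [h, if_true, this, Matrix.one_apply]
          simp
        · simp only [if_neg h, Matrix.one_apply]
          rw [if_neg (by grind)]
          simp
      rw [e']
      push_cast
      rw [add_smul, one_smul]
    · rintro a b ⟨⟨s, d⟩, i⟩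
      simp only [Matrix.of_apply, add_smul, Finset.sum_add_distrib]
      rw [E_g, hE]
      simp only [Fintype.sum_prod_type, Prod.mk.injEq]
      congr 1
      · rw [Finset.mul_sum]
        rw [Finset.sum_eq_single s, Finset.sum_eq_single d]
        · simp
        · intro x _ hx; simp [hx]
        · simp
        · intro x _ hx; simp [hx]
        · simp
      · rw [Finset.sum_eq_single s, Finset.sum_eq_single a, Finset.sum_eq_single i]
        · by_cases h : b = d
          · simp [h]
          · simp [h, Ne.symm h]
        · intro x _ hx; simp [Ne.symm hx]
        · simp
        · intro x _ hx; simp [hx]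
        · simp
        · intro x _ hx; simp [Ne.symm hx]
        · simp

open Matrix ComplexOrder in
lemma map_T_Lev (k : ℕ) : (K.Lev (k + 1)).map K.T = K.Lev (k + 1) := by
  obtain ⟨ι, _, _, w, M, hw, hM, hk, hE⟩ := K.exists_mat (k + 1)
  set π := Fintype.linearCombination ℂ w with hπ
  have hr : LinearMap.range π = K.Lev (k + 1) := by
    rw [← hw, hπ, Fintype.range_linearCombination]
  have hEπ : ∀ a b, K.E a b ∘ₗ π = π ∘ₗ (M a b).mulVecLin := by
    intro a b
    refine LinearMap.pi_ext' fun i => LinearMap.ext_ring ?_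
    simp [hπ, Fintype.linearCombination_apply, hE]
  set Tm : Matrix ι ι ℂ := (∑ a, ∑ b, M b a * M a b) + ((k + 1 : ℕ) : ℂ) • 1 with hTm
  have hTπ : K.T ∘ₗ π = π ∘ₗ Tm.mulVecLin := by
    refine LinearMap.ext fun v => ?_
    have hE' : ∀ a b v, K.E a b (π v) = π (M a b *ᵥ v) := fun a b v =>
      LinearMap.congr_fun (hEπ a b) v
    rw [LinearMap.comp_apply, LinearMap.comp_apply, Matrix.mulVecLin_apply, hTm, ← hk]
    simp only [T_apply, hE', Matrix.add_mulVec, Matrix.sum_mulVec, map_add, map_sum,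
      Matrix.mulVec_mulVec]
  have hpd : Tm.PosDef := by
    apply Matrix.PosDef.posSemidef_add
    · refine Matrix.posSemidef_sum _ fun a _ => Matrix.posSemidef_sum _ fun b _ => ?_
      rw [← hM a b]
      exact Matrix.posSemidef_conjTranspose_mul_self _
    · apply Matrix.PosDef.smul Matrix.PosDef.one
      exact_mod_cast Nat.succ_pos k
  have hsurj : Function.Surjective Tm.mulVecLin := by
    rw [Matrix.coe_mulVecLin]
    exact Matrix.mulVec_surjective_iff_isUnit.mpr hpd.isUnit
  rw [← hr, ← LinearMap.range_comp, hTπ, LinearMap.range_comp, LinearMap.range_eq_top.mpr hsurj,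
    Submodule.map_top]

lemma finite_Lev (k : ℕ) : FiniteDimensional ℂ (K.Lev k) := by
  obtain ⟨ι, _, _, w, M, hw, -⟩ := K.exists_mat k
  rw [← hw]
  exact FiniteDimensional.span_of_finite ℂ (Set.finite_range w)

/-- Span of words of length between `1` and `k`. -/
noncomputable def Fil : ℕ → Submodule ℂ A
  | 0 => ⊥
  | k + 1 => Fil k ⊔ K.Lev (k + 1)

lemma finite_Fil (k : ℕ) : FiniteDimensional ℂ (K.Fil k) := by
  induction k with
  | zero => rw [Fil]; infer_instance
  | succ k ih =>
    have := K.finite_Lev (k + 1)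
    rw [Fil]; infer_instance

lemma map_T_Fil (k : ℕ) : (K.Fil k).map K.T = K.Fil k := by
  induction k with
  | zero => simp [Fil]
  | succ k ih => rw [Fil, Submodule.map_sup, ih, map_T_Lev]

lemma Fil_mono : Monotone K.Fil := monotone_nat_of_le_succ fun k => by
  rw [Fil]; exact le_sup_left

lemma Lev_le (k : ℕ) : K.Lev k ≤ K.Lev 0 ⊔ K.Fil k := by
  cases k with
  | zero => exact le_sup_left
  | succ k => rw [Fil]; exact le_sup_right.trans le_sup_right

lemma map_c_Lev_zero (s : S) (a : W) : (K.Lev 0).map (K.c s a) = ⊥ := by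
  rw [Lev, Submodule.map_span]; simp [K.c1]

lemma map_c_Lev (k : ℕ) (s : S) (a : W) : (K.Lev (k + 1)).map (K.c s a) ≤ K.Lev k := by
  induction k with
  | zero =>
    rw [show K.Lev (0 + 1) = ⨆ s, ⨆ a, (K.Lev 0).map (LinearMap.mulLeft ℂ (K.g s a)) from rfl]
    simp only [Submodule.map_iSup]
    refine iSup_le fun t => iSup_le fun b => ?_
    rintro _ ⟨_, ⟨f, hf, rfl⟩, rfl⟩
    have h0 : K.c s a f = 0 := by
      have : K.c s a f ∈ (K.Lev 0).map (K.c s a) := ⟨f, hf, rfl⟩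
      rw [map_c_Lev_zero] at this
      simpa using this
    simp only [LinearMap.mulLeft_apply, K.cg, h0]
    split_ifs
    · simpa using hf
    · simp
  | succ k ih =>
    rw [Lev]
    simp only [Submodule.map_iSup]
    refine iSup_le fun t => iSup_le fun b => ?_
    rintro _ ⟨_, ⟨f, hf, rfl⟩, rfl⟩
    have h0 : K.c s a f ∈ K.Lev k := ih ⟨f, hf, rfl⟩
    simp only [LinearMap.mulLeft_apply, K.cg]
    refine Submodule.add_mem _ (Submodule.smul_mem _ _ (K.g_mul_mem_Lev _ _ _ _ h0)) ?_
    split_ifs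
    · exact hf
    · simp

lemma map_c_Fil (k : ℕ) (s : S) (a : W) : (K.Fil (k + 1)).map (K.c s a) ≤ K.Lev 0 ⊔ K.Fil k := by
  induction k with
  | zero =>
    rw [show K.Fil (0 + 1) = ⊥ ⊔ K.Lev (0 + 1) from rfl, bot_sup_eq]
    exact (K.map_c_Lev 0 s a).trans le_sup_left
  | succ k ih =>
    rw [Fil, Submodule.map_sup]
    refine sup_le (ih.trans (sup_le_sup_left (K.Fil_mono (Nat.le_succ k)) _)) ?_
    exact (K.map_c_Lev _ s a).trans (K.Lev_le _)

lemma c_mem (k : ℕ) (s : S) (a : W) (f : A) (hf : f ∈ K.Lev 0 ⊔ K.Fil k) :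
    K.c s a f ∈ K.Lev 0 ⊔ K.Fil k := by
  have : (K.Lev 0 ⊔ K.Fil k).map (K.c s a) ≤ K.Lev 0 ⊔ K.Fil k := by
    rw [Submodule.map_sup, map_c_Lev_zero, bot_sup_eq]
    exact (Submodule.map_mono (K.Fil_mono (Nat.le_succ k))).trans (K.map_c_Fil k s a)
  exact this ⟨f, hf, rfl⟩

lemma main_ind (J : Matrix W W ℂ) (hJ : J.transpose * J = 1) (hJ' : J.transpose = -J)
    (B : Subalgebra ℂ A) (hB : B.toSubmodule ≤ K.I J) (hq : ∀ s t, K.q J s t ∈ B) (k : ℕ) :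
    K.I J ⊓ K.Fil k ≤ B.toSubmodule := by
  induction k with
  | zero => simp [Fil]
  | succ k ih =>
    have hTB : ∀ f ∈ K.I J ⊓ K.Fil (k + 1), K.T f ∈ B := by
      rintro f ⟨hf, hfk⟩
      rw [K.T_of_mem_I J hJ hJ' f hf]
      refine Subalgebra.sum_mem _ fun s _ => Subalgebra.sum_mem _ fun t _ =>
        Subalgebra.smul_mem _ (Subalgebra.mul_mem _ (hq s t) ?_) _
      have h1 : K.Δ J s t f ∈ K.I J := K.Δ_mem_I J (fun a b => by
        have := congrFun (congrFun hJ' b) a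
        simpa using this) s t f hf
      have h2 : K.Δ J s t f ∈ K.Lev 0 ⊔ K.Fil k := by
        rw [Δ_apply]
        refine Submodule.sum_mem _ fun a _ => Submodule.sum_mem _ fun b _ =>
          Submodule.smul_mem _ _ (K.c_mem _ _ _ _ (K.map_c_Fil k t b ⟨f, hfk, rfl⟩))
      obtain ⟨x, hx, y, hy, hxy⟩ := Submodule.mem_sup.mp h2
      obtain ⟨r, rfl⟩ := Submodule.mem_span_singleton.mp hx
      have hy' : y ∈ K.I J := by
        have : y = K.Δ J s t f - r • 1 := by rw [← hxy]; abel
        rw [this]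
        exact Submodule.sub_mem _ h1 (Submodule.smul_mem _ _ (K.one_mem_I J))
      rw [← hxy]
      exact B.add_mem (B.smul_mem B.one_mem r) (ih ⟨hy', hy⟩)
    have hTF : ∀ f ∈ K.Fil (k + 1), K.T f ∈ K.Fil (k + 1) := fun f hf =>
      (K.map_T_Fil (k + 1)).le ⟨f, hf, rfl⟩
    have := K.finite_Fil (k + 1)
    have hsurj : Function.Surjective (K.T.restrict hTF) := by
      rintro ⟨y, hy⟩
      obtain ⟨x, hx, hxy⟩ := (K.map_T_Fil (k + 1)).ge hy
      exact ⟨⟨x, hx⟩, Subtype.ext hxy⟩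
    have hinj := LinearMap.injective_iff_surjective.mpr hsurj
    have hTK : ∀ f ∈ K.I J ⊓ K.Fil (k + 1), K.T f ∈ K.I J ⊓ K.Fil (k + 1) := fun f hf =>
      ⟨hB (hTB f hf), hTF f hf.2⟩
    have hinj2 : Function.Injective (K.T.restrict hTK) := by
      rintro ⟨x, hx⟩ ⟨y, hy⟩ hxy
      have h1 : K.T x = K.T y := congrArg Subtype.val hxy
      have h2 : (⟨x, hx.2⟩ : K.Fil (k + 1)) = ⟨y, hy.2⟩ := hinj (Subtype.ext h1)
      exact Subtype.ext (Subtype.mk.inj h2)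
    have : FiniteDimensional ℂ (K.I J ⊓ K.Fil (k + 1) : Submodule ℂ A) :=
      Submodule.finiteDimensional_of_le inf_le_right
    intro f hf
    obtain ⟨⟨x, hx⟩, hxf⟩ := LinearMap.injective_iff_surjective.mp hinj2 ⟨f, hf⟩
    have : K.T x = f := congrArg Subtype.val hxf
    rw [← this]
    exact hTB x hx

lemma exists_mem_Fil (hgen : Algebra.adjoin ℂ (Set.range fun x : S × W => K.g x.1 x.2) = ⊤)
    (f : A) : ∃ k, f ∈ K.Lev 0 ⊔ K.Fil k := by
  have hmono : Monotone fun k => K.Lev 0 ⊔ K.Fil k := fun i j h =>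
    sup_le_sup_left (K.Fil_mono h) _
  have hf : f ∈ Subalgebra.toSubmodule
      (Algebra.adjoin ℂ (Set.range fun x : S × W => K.g x.1 x.2)) := by rw [hgen]; trivial
  rw [Algebra.adjoin_eq_span] at hf
  induction hf using Submodule.span_induction with
  | zero => exact ⟨0, Submodule.zero_mem _⟩
  | add x y _ _ hx hy =>
    obtain ⟨i, hi⟩ := hx
    obtain ⟨j, hj⟩ := hy
    exact ⟨max i j, Submodule.add_mem _ (hmono (le_max_left i j) hi) (hmono (le_max_right i j) hj)⟩
  | smul r x _ hx =>
    obtain ⟨i, hi⟩ := hx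
    exact ⟨i, Submodule.smul_mem _ _ hi⟩
  | mem x hx =>
    have : ∃ k, x ∈ K.Lev k := by
      induction hx using Submonoid.closure_induction_left with
      | one => exact ⟨0, Submodule.subset_span rfl⟩
      | mul_left x hx y _ hy =>
        obtain ⟨⟨s, a⟩, rfl⟩ := hx
        obtain ⟨k, hk⟩ := hy
        exact ⟨k + 1, K.g_mul_mem_Lev k s a y hk⟩
    obtain ⟨k, hk⟩ := this
    exact ⟨k, K.Lev_le k hk⟩

theorem main (J : Matrix W W ℂ) (hJ : J.transpose * J = 1) (hJ' : J.transpose = -J)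
    (hgen : Algebra.adjoin ℂ (Set.range fun x : S × W => K.g x.1 x.2) = ⊤)
    (B : Subalgebra ℂ A) (hB : B.toSubmodule ≤ K.I J) (hq : ∀ s t, K.q J s t ∈ B) :
    K.I J ≤ B.toSubmodule := by
  intro f hf
  obtain ⟨k, hk⟩ := K.exists_mem_Fil hgen f
  obtain ⟨x, hx, y, hy, hxy⟩ := Submodule.mem_sup.mp hk
  obtain ⟨r, rfl⟩ := Submodule.mem_span_singleton.mp hx
  have hy' : y ∈ K.I J := by
    have : y = f - r • 1 := by rw [← hxy]; abel
    rw [this]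
    exact Submodule.sub_mem _ hf (Submodule.smul_mem _ _ (K.one_mem_I J))
  rw [← hxy]
  exact B.add_mem (B.smul_mem B.one_mem r) (K.main_ind J hJ hJ' B hB hq k ⟨hy', hy⟩)

/-- Group invariance along a one-parameter unipotent family implies Lie algebra invariance. -/
lemma unipotent (hgen : Algebra.adjoin ℂ (Set.range fun x : S × W => K.g x.1 x.2) = ⊤)
    (Y : Matrix W W ℂ) (ρ : ℂ → A →ₐ[ℂ] A)
    (hρ : ∀ t s d, ρ t (K.g s d) = K.g s d + t • ∑ b, Y b d • K.g s b)
    (f : A) (hf : ∀ t, ρ t f = f) : ∑ a, ∑ b, Y a b • K.E a b f = 0 := by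
  set D : A →ₗ[ℂ] A := ∑ a, ∑ b, Y a b • K.E a b with hD
  have hDa : ∀ f, D f = ∑ a, ∑ b, Y a b • K.E a b f := by
    intro f; simp [hD, LinearMap.sum_apply]
  have hDg : ∀ s d f, D (K.g s d * f) = K.g s d * D f + (∑ b, Y b d • K.g s b) * f := by
    intro s d f
    simp only [hDa, E_g, smul_add, Finset.sum_add_distrib, Finset.mul_sum, Finset.sum_mul]
    congr 1
    · simp
    · refine Finset.sum_congr rfl fun a _ => ?_
      simp
  have key : ∀ f : A, ∃ p : Polynomial A, p.coeff 0 = f ∧ p.coeff 1 = D f ∧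
      ∀ t : ℂ, ρ t f = p.eval (algebraMap ℂ A t) := by
    intro f
    have hf : f ∈ Subalgebra.toSubmodule
      (Algebra.adjoin ℂ (Set.range fun x : S × W => K.g x.1 x.2)) := by rw [hgen]; trivial
    rw [Algebra.adjoin_eq_span] at hf
    induction hf using Submodule.span_induction with
    | zero => exact ⟨0, by simp⟩
    | add x y _ _ hx hy =>
      obtain ⟨p, hp0, hp1, hp⟩ := hx
      obtain ⟨p', hp0', hp1', hp'⟩ := hy
      exact ⟨p + p', by simp [hp0, hp0'], by simp [hp1, hp1'], by simp [hp, hp']⟩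
    | smul r x _ hx =>
      obtain ⟨p, hp0, hp1, hp⟩ := hx
      refine ⟨Polynomial.C (algebraMap ℂ A r) * p, ?_, ?_, ?_⟩
      · simp [hp0, Algebra.smul_def]
      · rw [Polynomial.coeff_C_mul, hp1, map_smul, Algebra.smul_def]
      · intro t
        rw [map_smul, hp, Polynomial.eval_C_mul, Algebra.smul_def]
    | mem x hx =>
      induction hx using Submonoid.closure_induction_left with
      | one => exact ⟨1, by simp, by simp [hDa, E_one, Polynomial.coeff_one], by simp⟩
      | mul_left x hx y _ hy =>
        obtain ⟨⟨s, a⟩, rfl⟩ := hx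
        obtain ⟨p, hp0, hp1, hp⟩ := hy
        refine ⟨Polynomial.C (K.g s a) * p +
          Polynomial.C (∑ b, Y b a • K.g s b) * p * Polynomial.X, ?_, ?_, ?_⟩
        · simp [hp0]
        · rw [Polynomial.coeff_add, Polynomial.coeff_C_mul, hp1, Polynomial.coeff_mul_X,
            Polynomial.coeff_C_mul, hp0, hDg]
        · intro t
          rw [map_mul, hρ, hp, Polynomial.eval_add, Polynomial.eval_mul_X, Polynomial.eval_C_mul,
            Polynomial.eval_C_mul, add_mul, ← Algebra.commutes, ← Algebra.smul_def,
            smul_mul_assoc]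
  rw [← hDa]
  obtain ⟨p, hp0, hp1, hp⟩ := key f
  rw [← hp1, ← Module.forall_dual_apply_eq_zero_iff ℂ]
  intro φ
  let Q : Polynomial ℂ := ∑ i ∈ Finset.range (p.natDegree + 2), Polynomial.monomial i (φ (p.coeff i))
  have hQ : ∀ t, Q.eval t = φ f := by
    intro t
    rw [← hf t, hp t, Polynomial.eval_eq_sum_range' (p := p) (n := p.natDegree + 2) (by omega), map_sum,
      Polynomial.eval_finsetSum]
    refine Finset.sum_congr rfl fun i _ => ?_
    rw [Polynomial.eval_monomial, ← map_pow, ← Algebra.commutes, ← Algebra.smul_def, map_smul,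
      smul_eq_mul, mul_comm]
  have hQ' : Q = Polynomial.C (φ f) := Polynomial.funext fun t => by rw [hQ, Polynomial.eval_C]
  have h1 : Q.coeff 1 = φ (p.coeff 1) := by
    simp only [Q, Polynomial.finsetSum_coeff, Polynomial.coeff_monomial]
    rw [Finset.sum_ite_eq_of_mem']
    simp
  rw [← h1, hQ', Polynomial.coeff_C]
  simp

end FockData


lemma pderiv_comm' {σ : Type} (i j : σ) (p : MvPolynomial σ ℂ) :
    pderiv i (pderiv j p) = pderiv j (pderiv i p) := by
  classical
  have h : ⁅(pderiv i : Derivation ℂ (MvPolynomial σ ℂ) (MvPolynomial σ ℂ)),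
      (pderiv j : Derivation ℂ (MvPolynomial σ ℂ) (MvPolynomial σ ℂ))⁆ = 0 := by
    apply MvPolynomial.derivation_ext
    intro k
    rw [Derivation.commutator_apply]
    simp [pderiv_X, Pi.single_apply, apply_ite]
  have := congrArg (fun D => D p) h
  simp only [Derivation.commutator_apply] at this
  exact sub_eq_zero.mp this

lemma pderiv_comm'' {σ : Type} (i j : σ) (p : MvPolynomial σ ℂ) :
    (pderiv i).toLinearMap ((pderiv j).toLinearMap p : MvPolynomial σ ℂ) =
    ((pderiv j).toLinearMap ((pderiv i).toLinearMap p : MvPolynomial σ ℂ) : MvPolynomial σ ℂ) :=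
  pderiv_comm' i j p

/-- Contraction by a coordinate. -/
noncomputable def con (n r : ℕ) (j : Fin (2 * r)) (a : Fin n ⊕ Fin n) :
    ExteriorAlgebra ℂ (UMod n r) →ₗ[ℂ] ExteriorAlgebra ℂ (UMod n r) :=
  CliffordAlgebra.contractLeft (Q := (0 : QuadraticForm ℂ (UMod n r))) (LinearMap.proj (j, a))

lemma con_one (n r : ℕ) (j : Fin (2 * r)) (a : Fin n ⊕ Fin n) : con n r j a 1 = 0 :=
  CliffordAlgebra.contractLeft_one _ _

lemma con_con (n r : ℕ) (j k : Fin (2 * r)) (a b : Fin n ⊕ Fin n)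
    (x : ExteriorAlgebra ℂ (UMod n r)) :
    con n r j a (con n r k b x) = (-1 : ℂ) • con n r k b (con n r j a x) := by
  have h : con n r j a (con n r k b x) = - con n r k b (con n r j a x) :=
    CliffordAlgebra.contractLeft_comm (Q := (0 : QuadraticForm ℂ (UMod n r)))
      (LinearMap.proj (j, a)) (LinearMap.proj (k, b)) x
  rw [h, neg_smul, one_smul]

lemma con_mul (n r : ℕ) (j k : Fin (2 * r)) (a b : Fin n ⊕ Fin n)
    (x : ExteriorAlgebra ℂ (UMod n r)) :
    con n r j a (ExteriorAlgebra.ι ℂ (eU n r k b) * x) =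
      (-1 : ℂ) • (ExteriorAlgebra.ι ℂ (eU n r k b) * con n r j a x) +
        (if j = k ∧ a = b then x else 0) := by
  have h : con n r j a (ExteriorAlgebra.ι ℂ (eU n r k b) * x) =
      (eU n r k b (j, a)) • x - ExteriorAlgebra.ι ℂ (eU n r k b) * con n r j a x :=
    CliffordAlgebra.contractLeft_ι_mul (Q := (0 : QuadraticForm ℂ (UMod n r)))
      (LinearMap.proj (j, a)) (eU n r k b) x
  rw [h, neg_smul, one_smul, sub_eq_neg_add]
  congr 1
  simp [eU, Pi.single_apply]

lemma ι_swap (n r : ℕ) (j k : Fin (2 * r)) (a b : Fin n ⊕ Fin n) :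
    ExteriorAlgebra.ι ℂ (eU n r j a) * ExteriorAlgebra.ι ℂ (eU n r k b) =
    (-1 : ℂ) • (ExteriorAlgebra.ι ℂ (eU n r k b) * ExteriorAlgebra.ι ℂ (eU n r j a)) := by
  rw [neg_smul, one_smul]
  exact eq_neg_of_add_eq_zero_left (ExteriorAlgebra.ι_add_mul_swap _ _)

set_option maxHeartbeats 2000000 in
/-- The Fock structure on `Sym(V) ⊗ Λ(U)`. -/
noncomputable def fock (n m r : ℕ) :
    FockData (SymTensorExt n m r) (Fin m ⊕ Fin (2 * r)) (Fin n ⊕ Fin n) where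
  g s a := match s with
    | Sum.inl i => X (i, a) ⊗ₜ 1
    | Sum.inr j => 1 ⊗ₜ ExteriorAlgebra.ι ℂ (eU n r j a)
  c s a := match s with
    | Sum.inl i => LinearMap.rTensor _ (pderiv (i, a)).toLinearMap
    | Sum.inr j => LinearMap.lTensor _ (con n r j a)
  η s t := match s, t with
    | Sum.inr _, Sum.inr _ => -1
    | _, _ => 1
  η_symm := by rintro (_ | _) (_ | _) <;> rfl
  η_sq := by rintro (_ | _) (_ | _) <;> simp
  gg := by
    rintro (s | s) a (t | t) b
    · simp [mul_comm]
    · simp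
    · simp
    · dsimp only
      rw [Algebra.TensorProduct.tmul_mul_tmul, Algebra.TensorProduct.tmul_mul_tmul, ι_swap,
        TensorProduct.tmul_smul]
  cg := by
    rintro (s | s) a (t | t) b f
    · induction f using TensorProduct.induction_on with
      | zero => simp
      | add x y hx hy =>
        simp only [mul_add, map_add, smul_add] at hx hy ⊢
        rw [hx, hy]
        split_ifs <;> abel
      | tmul p x =>
        by_cases h : s = t ∧ a = b
        · obtain ⟨rfl, rfl⟩ := h
          simp [TensorProduct.add_tmul]
        · have : (t, b) ≠ (s, a) := by grind
          have h' : ¬ (Sum.inl s = (Sum.inl t : Fin m ⊕ Fin (2 * r)) ∧ a = b) := by simpa using h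
          rw [if_neg h']
          simp [pderiv_X_of_ne this]
    · induction f using TensorProduct.induction_on with
      | zero => simp
      | add x y hx hy =>
        simp only [mul_add, map_add, smul_add] at hx hy ⊢
        rw [hx, hy]
        split_ifs <;> abel
      | tmul p x => simp
    · induction f using TensorProduct.induction_on with
      | zero => simp
      | add x y hx hy =>
        simp only [mul_add, map_add, smul_add] at hx hy ⊢
        rw [hx, hy]
        split_ifs <;> abel
      | tmul p x => simp
    · induction f using TensorProduct.induction_on with
      | zero => simp
      | add x y hx hy =>
        simp only [mul_add, map_add, smul_add] at hx hy ⊢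
        rw [hx, hy]
        split_ifs <;> abel
      | tmul p x =>
        dsimp only
        rw [Algebra.TensorProduct.tmul_mul_tmul, LinearMap.lTensor_tmul, LinearMap.lTensor_tmul,
          con_mul, TensorProduct.tmul_add, TensorProduct.tmul_smul,
          Algebra.TensorProduct.tmul_mul_tmul, one_mul]
        congr 1
        by_cases h : s = t ∧ a = b
        · obtain ⟨rfl, rfl⟩ := h
          simp
        · have h' : ¬ (Sum.inr s = (Sum.inr t : Fin m ⊕ Fin (2 * r)) ∧ a = b) := by simpa using h
          rw [if_neg h, if_neg h', TensorProduct.tmul_zero]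
  cc := by
    rintro (s | s) a (t | t) b f
    · induction f using TensorProduct.induction_on with
      | zero => simp
      | add x y hx hy =>
        simp only [map_add, smul_add] at hx hy ⊢
        rw [hx, hy]
      | tmul p x =>
        dsimp only
        rw [LinearMap.rTensor_tmul, LinearMap.rTensor_tmul, LinearMap.rTensor_tmul,
          LinearMap.rTensor_tmul, one_smul, pderiv_comm'']
    · induction f using TensorProduct.induction_on with
      | zero => simp
      | add x y hx hy =>
        simp only [map_add, smul_add] at hx hy ⊢
        rw [hx, hy]
      | tmul p x => simp
    · induction f using TensorProduct.induction_on with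
      | zero => simp
      | add x y hx hy =>
        simp only [map_add, smul_add] at hx hy ⊢
        rw [hx, hy]
      | tmul p x => simp
    · induction f using TensorProduct.induction_on with
      | zero => simp
      | add x y hx hy =>
        simp only [map_add, smul_add] at hx hy ⊢
        rw [hx, hy]
      | tmul p x =>
        dsimp only
        rw [LinearMap.lTensor_tmul, LinearMap.lTensor_tmul, con_con, TensorProduct.tmul_smul,
          LinearMap.lTensor_tmul, LinearMap.lTensor_tmul]
  c1 := by
    rintro (s | s) a
    · simp [Algebra.TensorProduct.one_def]
    · rw [Algebra.TensorProduct.one_def]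
      dsimp only
      rw [LinearMap.lTensor_tmul, con_one, TensorProduct.tmul_zero]

lemma eU_span (n r : ℕ) (u : UMod n r) : u = ∑ p : Fin (2 * r) × (Fin n ⊕ Fin n), u p • eU n r p.1 p.2 := by
  funext q
  simp [eU, Finset.sum_apply, Pi.single_apply]

lemma fock_gen (n m r : ℕ) : Algebra.adjoin ℂ (Set.range
    fun x : (Fin m ⊕ Fin (2 * r)) × (Fin n ⊕ Fin n) => (fock n m r).g x.1 x.2) = ⊤ := by
  set B := Algebra.adjoin ℂ (Set.range
    fun x : (Fin m ⊕ Fin (2 * r)) × (Fin n ⊕ Fin n) => (fock n m r).g x.1 x.2) with hB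
  have hg : ∀ s a, (fock n m r).g s a ∈ B := fun s a => Algebra.subset_adjoin ⟨(s, a), rfl⟩
  have h1 : ∀ p : MvPolynomial (Fin m × (Fin n ⊕ Fin n)) ℂ,
      (p ⊗ₜ 1 : SymTensorExt n m r) ∈ B := by
    intro p
    induction p using MvPolynomial.induction_on with
    | C c => exact B.algebraMap_mem c
    | add p q hp hq => rw [TensorProduct.add_tmul]; exact B.add_mem hp hq
    | mul_X p i hp =>
      have := B.mul_mem hp (hg (Sum.inl i.1) i.2)
      simpa [fock] using this
  have h2 : ∀ x : ExteriorAlgebra ℂ (UMod n r), (1 ⊗ₜ x : SymTensorExt n m r) ∈ B := by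
    intro x
    induction x using ExteriorAlgebra.induction with
    | algebraMap c =>
      rw [Algebra.algebraMap_eq_smul_one, TensorProduct.tmul_smul]
      exact B.smul_mem B.one_mem c
    | ι u =>
      rw [eU_span n r u]
      simp only [map_sum, map_smul, TensorProduct.tmul_sum, TensorProduct.tmul_smul]
      exact B.sum_mem fun p _ => B.smul_mem (hg (Sum.inr p.1) p.2) _
    | mul a b ha hb =>
      have := B.mul_mem ha hb
      simpa using this
    | add a b ha hb => rw [TensorProduct.tmul_add]; exact B.add_mem ha hb
  rw [eq_top_iff]
  intro f _
  induction f using TensorProduct.induction_on with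
  | zero => exact B.zero_mem
  | add x y hx hy => exact B.add_mem (hx trivial) (hy trivial)
  | tmul p x =>
    have := B.mul_mem (h1 p) (h2 x)
    simpa using this

lemma rho_g (n m r : ℕ) (S : Matrix (Fin n ⊕ Fin n) (Fin n ⊕ Fin n) ℂ) (s) (d) :
    rho n m r S ((fock n m r).g s d) = ∑ b, S b d • (fock n m r).g s b := by
  rcases s with i | j
  · simp only [rho, fock, Algebra.TensorProduct.map_tmul, aeval_X, map_one, TensorProduct.sum_tmul]
    refine Finset.sum_congr rfl fun b _ => ?_
    rw [← MvPolynomial.smul_eq_C_mul, TensorProduct.smul_tmul']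
  · simp only [rho, fock, Algebra.TensorProduct.map_tmul, map_one]
    have : ExteriorAlgebra.map (matActU n r S) (ExteriorAlgebra.ι ℂ (eU n r j d)) =
        ∑ b, S b d • ExteriorAlgebra.ι ℂ (eU n r j b) := by
      rw [ExteriorAlgebra.map_apply_ι]
      have h : matActU n r S (eU n r j d) = ∑ b, S b d • eU n r j b := by
        funext p
        obtain ⟨k, a⟩ := p
        simp only [matActU, eU, LinearMap.coe_mk, AddHom.coe_mk, Finset.sum_apply, Pi.smul_apply,
          Pi.single_apply, Prod.mk.injEq, smul_eq_mul, mul_ite, mul_one, mul_zero]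
        by_cases h : k = j <;> simp [h]
      rw [h]; simp
    rw [this, TensorProduct.tmul_sum]
    simp only [TensorProduct.tmul_smul]

lemma q_inv (n m r : ℕ) (s t) : (fock n m r).q (Matrix.J (Fin n) ℂ) s t ∈ spInvariants n m r := by
  intro S hS
  rw [SymplecticGroup.mem_iff] at hS
  have h : ∀ c d, ∑ a, ∑ b, Matrix.J (Fin n) ℂ a b * S c a * S d b = Matrix.J (Fin n) ℂ c d := by
    intro c d
    conv_rhs => rw [← hS]
    simp only [Matrix.mul_apply, Matrix.transpose_apply, Finset.sum_mul]
    rw [Finset.sum_comm]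
    exact Finset.sum_congr rfl fun a _ => Finset.sum_congr rfl fun b _ => by ring
  simp only [FockData.q, map_sum, map_smul, map_mul, rho_g, Finset.sum_mul_sum, Finset.smul_sum]
  have e : ∑ c, ∑ d, Matrix.J (Fin n) ℂ c d • ((fock n m r).g s c * (fock n m r).g t d) =
      ∑ c, ∑ d, (∑ a, ∑ b, Matrix.J (Fin n) ℂ a b * S c a * S d b) •
        ((fock n m r).g s c * (fock n m r).g t d) := by
    simp only [h]
  rw [e]
  simp only [Finset.sum_smul, smul_mul_smul_comm, smul_smul]
  have h5 : ∀ Y : (Fin n ⊕ Fin n) → (Fin n ⊕ Fin n) → (Fin n ⊕ Fin n) → (Fin n ⊕ Fin n) →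
      SymTensorExt n m r,
     ∑ a, ∑ b, ∑ c, ∑ d, Y a b c d = ∑ c, ∑ d, ∑ a, ∑ b, Y a b c d := by
    intro Y
    rw [Finset.sum_congr rfl fun a _ => Finset.sum_comm]
    rw [Finset.sum_comm]
    refine Finset.sum_congr rfl fun c _ => ?_
    rw [Finset.sum_congr rfl fun a _ => Finset.sum_comm]
    rw [Finset.sum_comm]
  rw [h5]
  refine Finset.sum_congr rfl fun c _ => Finset.sum_congr rfl fun d _ =>
    Finset.sum_congr rfl fun a _ => Finset.sum_congr rfl fun b _ => ?_
  rw [mul_assoc]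

lemma qVV_eq (n m r : ℕ) (i j : Fin m) :
    qVV n m r i j = (fock n m r).q (Matrix.J (Fin n) ℂ) (Sum.inl i) (Sum.inl j) := by
  simp only [qVV, FockData.q, fock, TensorProduct.sum_tmul, Algebra.TensorProduct.tmul_mul_tmul,
    mul_one]
  refine Finset.sum_congr rfl fun a _ => Finset.sum_congr rfl fun b _ => ?_
  rw [mul_assoc, ← MvPolynomial.smul_eq_C_mul, TensorProduct.smul_tmul']

lemma qVU_eq (n m r : ℕ) (i : Fin m) (j : Fin (2 * r)) :
    qVU n m r i j = (fock n m r).q (Matrix.J (Fin n) ℂ) (Sum.inl i) (Sum.inr j) := by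
  simp [qVU, FockData.q, fock]

lemma qUU_eq (n m r : ℕ) (i j : Fin (2 * r)) :
    qUU n m r i j = (fock n m r).q (Matrix.J (Fin n) ℂ) (Sum.inr i) (Sum.inr j) := by
  simp [qUU, FockData.q, fock]

lemma J_skew (n : ℕ) (a b : Fin n ⊕ Fin n) :
    Matrix.J (Fin n) ℂ a b = - Matrix.J (Fin n) ℂ b a := by
  have := congrFun (congrFun (Matrix.J_transpose (Fin n) ℂ) b) a
  simpa using this

lemma FockData.q_symm {A S W : Type} [Ring A] [Algebra ℂ A] [Fintype S] [Fintype W]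
    [DecidableEq S] [DecidableEq W] (K : FockData A S W) (J : Matrix W W ℂ)
    (hJ : ∀ a b, J a b = - J b a) (s t : S) : K.q J s t = -(K.η s t • K.q J t s) := by
  simp only [FockData.q]
  rw [Finset.sum_comm, Finset.smul_sum, ← Finset.sum_neg_distrib]
  refine Finset.sum_congr rfl fun b _ => ?_
  rw [Finset.smul_sum, ← Finset.sum_neg_distrib]
  refine Finset.sum_congr rfl fun a _ => ?_
  rw [hJ, K.gg s a t b, neg_smul, smul_comm]

lemma q_symm (n m r : ℕ) (s t) : (fock n m r).q (Matrix.J (Fin n) ℂ) s t =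
    -((fock n m r).η s t • (fock n m r).q (Matrix.J (Fin n) ℂ) t s) :=
  (fock n m r).q_symm _ (J_skew n) s t

lemma eq_zero_of_eq_neg_self {A : Type} [Ring A] [Algebra ℂ A] {x : A} (h : x = -x) : x = 0 := by
  have h2 : (2 : ℂ) • x = 0 := by rw [two_smul]; exact add_eq_zero_iff_eq_neg.mpr h
  rw [← inv_smul_smul₀ (two_ne_zero : (2 : ℂ) ≠ 0) x, h2, smul_zero]

lemma q_VV_self (n m r : ℕ) (i : Fin m) :
    (fock n m r).q (Matrix.J (Fin n) ℂ) (Sum.inl i) (Sum.inl i) = 0 := by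
  have h := q_symm n m r (Sum.inl i) (Sum.inl i)
  have h1 : (fock n m r).η (Sum.inl i) (Sum.inl i) = 1 := rfl
  rw [h1, one_smul] at h
  exact eq_zero_of_eq_neg_self h

open Matrix in
lemma transvection_mem (n : ℕ) (v : Fin n ⊕ Fin n → ℂ) (t : ℂ) :
    1 + t • (Matrix.vecMulVec v v * Matrix.J (Fin n) ℂ) ∈ Matrix.symplecticGroup (Fin n) ℂ := by
  rw [SymplecticGroup.mem_iff]
  set P := Matrix.vecMulVec v v with hP
  set J := Matrix.J (Fin n) ℂ with hJ
  have hPt : Pᵀ = P := by ext a b; simp [hP, Matrix.vecMulVec_apply, mul_comm]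
  have hJt : Jᵀ = -J := Matrix.J_transpose _ _
  have hJJ : J * J = -1 := Matrix.J_squared _ _
  have hPJP : P * J * P = 0 := by
    have hv : v ⬝ᵥ (J *ᵥ v) = 0 := by
      have h1 : v ⬝ᵥ (J *ᵥ v) = - (v ⬝ᵥ (J *ᵥ v)) := by
        conv_lhs => rw [Matrix.dotProduct_mulVec, ← Matrix.mulVec_transpose, hJt,
          Matrix.neg_mulVec, neg_dotProduct, dotProduct_comm]
      exact self_eq_neg.mp h1
    rw [mul_assoc, hP, Matrix.mul_vecMulVec, Matrix.vecMulVec_mul_vecMulVec, hv]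
    simp
  rw [Matrix.transpose_add, Matrix.transpose_one, Matrix.transpose_smul, Matrix.transpose_mul,
    hPt, hJt]
  have e : (1 + t • (P * J)) * J * (1 + t • (-J * P)) =
      J + t • (P * (J * J)) - t • ((J * J) * P) - (t * t) • ((P * (J * J)) * (J * P)) := by
    simp only [add_mul, mul_add, one_mul, mul_one, smul_mul_assoc, mul_smul_comm, neg_mul, mul_neg,
      smul_neg, smul_smul, mul_assoc, smul_add]
    abel
  rw [e, hJJ]
  have : P * -1 * (J * P) = 0 := by
    rw [mul_neg, mul_one, neg_mul, ← mul_assoc, hPJP, neg_zero]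
  rw [this]
  simp

lemma spInv_le_I (n m r : ℕ) :
    (spInvariants n m r).toSubmodule ≤ (fock n m r).I (Matrix.J (Fin n) ℂ) := by
  intro f hf
  have h1 : ∀ v : Fin n ⊕ Fin n → ℂ,
      ∑ a, ∑ c, (v a * v c) • (fock n m r).F (Matrix.J (Fin n) ℂ) a c f = 0 := by
    intro v
    have := (fock n m r).unipotent (fock_gen n m r) (Matrix.vecMulVec v v * Matrix.J (Fin n) ℂ)
      (fun t => rho n m r (1 + t • (Matrix.vecMulVec v v * Matrix.J (Fin n) ℂ))) ?_ f
      (fun t => hf _ (transvection_mem n v t))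
    · rw [← this]
      refine Finset.sum_congr rfl fun a _ => ?_
      simp only [FockData.F_apply, Finset.smul_sum, Matrix.mul_apply, Matrix.vecMulVec_apply,
        Finset.sum_smul, smul_smul]
      rw [Finset.sum_comm]
    · intro t s d
      rw [rho_g]
      simp only [Matrix.add_apply, Matrix.smul_apply, add_smul, Finset.sum_add_distrib,
        Matrix.one_apply, Finset.smul_sum, smul_eq_mul, mul_smul]
      simp
  intro a c
  set G := fun a c => (fock n m r).F (Matrix.J (Fin n) ℂ) a c f with hG
  have hs : ∀ a, G a a = 0 := by
    intro a
    have := h1 (Pi.single a 1)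
    simpa [Pi.single_apply, ite_mul, ite_smul, hG] using this
  by_cases hac : a = c
  · subst hac
    have := hs a
    simp only [hG] at this
    rw [this, add_zero]
  · have h2 := h1 (Pi.single a 1 + Pi.single c 1)
    simp only [Pi.add_apply, Pi.single_apply, add_mul, mul_add, add_smul, Finset.sum_add_distrib,
      ite_mul, mul_ite, one_mul, mul_one, zero_mul, mul_zero, ite_smul, one_smul, zero_smul,
      Finset.sum_ite_eq', Finset.mem_univ, if_true] at h2
    have e1 := hs a
    have e2 := hs c
    simp only [hG] at e1 e2
    simpa [e1, e2, Finset.sum_ite_eq', add_comm] using h2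

/-- The invariants of the diagonal `Sp(2n, ℂ)`-action on `Sym(V) ⊗ Λ(U)`, with
`V = (ℂ^{2n})^{⊕m}` and `U = (ℂ^{2n})^{⊕2r}`, are generated by the quadratic symplectic
pairings between two (distinct, if both in `V`) copies of `ℂ^{2n}` in `V` or in `U`. -/
theorem stmt8 (n m r : ℕ) :
    Algebra.adjoin ℂ
      ({x | ∃ i j : Fin m, i ≠ j ∧ x = qVV n m r i j} ∪
       {x | ∃ (i : Fin m) (j : Fin (2 * r)), x = qVU n m r i j} ∪
       {x | ∃ i j : Fin (2 * r), x = qUU n m r i j})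
      = spInvariants n m r := by
  have hle : Algebra.adjoin ℂ
      ({x | ∃ i j : Fin m, i ≠ j ∧ x = qVV n m r i j} ∪
       {x | ∃ (i : Fin m) (j : Fin (2 * r)), x = qVU n m r i j} ∪
       {x | ∃ i j : Fin (2 * r), x = qUU n m r i j}) ≤ spInvariants n m r := by
    rw [Algebra.adjoin_le_iff]
    rintro x ((⟨i, j, _, rfl⟩ | ⟨i, j, rfl⟩) | ⟨i, j, rfl⟩)
    · rw [qVV_eq]; exact q_inv n m r _ _
    · rw [qVU_eq]; exact q_inv n m r _ _
    · rw [qUU_eq]; exact q_inv n m r _ _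
  refine le_antisymm hle ?_
  set B := Algebra.adjoin ℂ
      ({x | ∃ i j : Fin m, i ≠ j ∧ x = qVV n m r i j} ∪
       {x | ∃ (i : Fin m) (j : Fin (2 * r)), x = qVU n m r i j} ∪
       {x | ∃ i j : Fin (2 * r), x = qUU n m r i j}) with hBdef
  have hJ' : (Matrix.J (Fin n) ℂ).transpose = - Matrix.J (Fin n) ℂ := Matrix.J_transpose _ _
  have hJ : (Matrix.J (Fin n) ℂ).transpose * Matrix.J (Fin n) ℂ = 1 := by
    rw [hJ', neg_mul, Matrix.J_squared, neg_neg]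
  have hB : B.toSubmodule ≤ (fock n m r).I (Matrix.J (Fin n) ℂ) :=
    fun x hx => spInv_le_I n m r (hle hx)
  have hVU : ∀ i j, (fock n m r).q (Matrix.J (Fin n) ℂ) (Sum.inl i) (Sum.inr j) ∈ B := by
    intro i j
    rw [← qVU_eq]
    exact Algebra.subset_adjoin (Or.inl (Or.inr ⟨i, j, rfl⟩))
  have hq : ∀ s t, (fock n m r).q (Matrix.J (Fin n) ℂ) s t ∈ B := by
    rintro (i | i) (j | j)
    · by_cases h : i = j
      · subst h
        rw [q_VV_self]
        exact B.zero_mem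
      · rw [← qVV_eq]
        exact Algebra.subset_adjoin (Or.inl (Or.inl ⟨i, j, h, rfl⟩))
    · exact hVU i j
    · rw [q_symm]
      exact B.neg_mem (B.smul_mem (hVU j i) _)
    · rw [← qUU_eq]
      exact Algebra.subset_adjoin (Or.inr ⟨i, j, rfl⟩)
  exact fun x hx => (fock n m r).main (Matrix.J (Fin n) ℂ) hJ hJ' (fock_gen n m r) B hB hq
    (spInv_le_I n m r hx)
end
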